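/- For every real β > 0, every real external field h, and every exponent k ≥ 2 there exists a constant c > 0 such that for all n ≥ 2 and every M with n² ≤ M ≤ n^k, the Flat-swap chain for the mean-field Ising model on n vertices with the entropy-dampening distributions ρ₀,…,ρ_M has mixing time τ(ε) ≤ n^c·(1 + ln(1/ε)) for every ε ∈ (0,1); i.e., Flat-swap mixes polynomially at every inverse temperature and every external field. -/

import Mathlib

/-!
The chain is reversible with holding probability at least `1/4`, so a Poincaré inequality with a
polynomial constant gives the mixing bound: `step_contract` and `tv_decay` turn it into exponential
decay of the total variation distance, and the logarithm of the smallest stationary weight is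
polynomial in `n` (`isingRho_lower`, `mixingTime_le`).

At level `i` the number `k` of plus spins has law proportional to `e^(θ ψ(k))`, where `θ = i / M` and
`ψ(k)` (`logWt`) is the logarithm of the total Gibbs weight of the layer `k`, and the spins are
uniform given `k`. Once `n` is large, `ψ` has no barrier inside a phase: for `h ≥ 0` it increases on
`k ≥ n/2`, and on `k ≤ n/2` it decreases up to an additive constant `β h² / 2` (`logWt_shape`).
Hence each level satisfies a polynomial Poincaré inequality inside the plus phase and inside the
minus phase, by comparing along random monotone paths to the all-plus or all-minus state
(`layer_up`, `layer_down`). At level `0` the law of `k` is uniform and the inequality is global.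

The swapping chain is handled by `TwoModes.poincare`. The variance splits into the part inside
the phases, which tensorizes over the levels (`efron_stein`), and the variance of the conditional
mean given the vector of phases. The latter is tensorized as well, leaving the cost of flipping the
phase at one level `i`; such a flip is carried by adjacent swaps down to level `0`, where the level
chain performs it, and back. Swaps are cheap because `M ≥ n²` makes consecutive levels comparable,
and no bottleneck appears on the way because the odds of the plus phase increase with the level.
That monotonicity (`phase_odds_mono`) follows by pairing the term of the layers `(r, l)` with the
term of the mirror layers `(n - l, n - r)`.

For `h < 0` the spins are reversed (`twoModes_reverse`). The finitely many small `n` have `ψ`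
bounded, so every level has a global Poincaré inequality and tensorization alone suffices
(`poincare_of_levels`). The bounds are combined in `ising_gap`.
-/

open Finset

noncomputable section

/-- The mixing time of a Markov chain with transition matrix `P` and target
distribution `π`. -/
noncomputable def mixingTime {S : Type} [Fintype S] [DecidableEq S]
    (P : Matrix S S ℝ) (π : S → ℝ) (ε : ℝ) : ℕ :=
  sInf {t : ℕ | ∀ t' : ℕ, t ≤ t' → ∀ x : S,
    (1/2) * ∑ y : S, |(P ^ t') x y - π y| ≤ ε}

/-- Exchange coordinates `i` and `i+1` of the tuple `x`. -/
def swapConfigAt {E : Type} {M : ℕ} (x : Fin (M+1) → E) (i : Fin M) :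
    Fin (M+1) → E :=
  Function.update (Function.update x i.castSucc (x i.succ)) i.succ (x i.castSucc)

/-- Off-diagonal transition rates of the swapping chain with level proposal `Q` and
tempering distributions `π`: level Metropolis moves in a uniformly random coordinate
(with probability 1/2) and swaps of adjacent coordinates (with probability 1/2). -/
noncomputable def swapOff {E : Type} [Fintype E] [DecidableEq E] {M : ℕ}
    (Q : E → E → ℝ) (π : Fin (M+1) → E → ℝ) (x y : Fin (M+1) → E) : ℝ :=
  (∑ i : Fin (M+1),
    if y = Function.update x i (y i) ∧ y i ≠ x i then
      (1 / (2 * ((M : ℝ) + 1))) * Q (x i) (y i) * min 1 (π i (y i) / π i (x i))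
    else 0) +
  (∑ i : Fin M,
    if y = swapConfigAt x i then
      (1 / (2 * (M : ℝ))) * min 1
        ((π i.castSucc (x i.succ) * π i.succ (x i.castSucc)) /
          (π i.castSucc (x i.castSucc) * π i.succ (x i.succ)))
    else 0)

/-- The swapping (parallel tempering) chain with level proposal `Q` and tempering
distributions `π`. -/
noncomputable def swapChain {E : Type} [Fintype E] [DecidableEq E] {M : ℕ}
    (Q : E → E → ℝ) (π : Fin (M+1) → E → ℝ) :
    Matrix (Fin (M+1) → E) (Fin (M+1) → E) ℝ :=
  Matrix.of fun x y =>
    if y = x then 1 - ∑ z ∈ Finset.univ.erase x, swapOff Q π x z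
    else swapOff Q π x y



/-- Number of `+1` spins (`true`) in an Ising configuration. -/
def plusCount (n : ℕ) (x : Fin n → Bool) : ℕ :=
  (Finset.univ.filter (fun i => x i = true)).card

/-- Hamiltonian of the mean-field Ising model with external field `h`:
`H(x) = Σ_{i<j} [x_i = x_j] + h·#{i : x_i = +1}`. -/
noncomputable def isingH (n : ℕ) (h : ℝ) (x : Fin n → Bool) : ℝ :=
  ((Finset.univ.filter
      (fun p : Fin n × Fin n => p.1 < p.2 ∧ x p.1 = x p.2)).card : ℝ) +
    h * (plusCount n x : ℝ)

/-- Unnormalized entropy-dampening distribution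
`ρ_i(x) ∝ e^(β_i H(x))·binom(n, k(x))^((i−M)/M)` with `β_i = i·β/M`. -/
noncomputable def isingRhoUn (n M : ℕ) (β h : ℝ) (i : Fin (M+1))
    (x : Fin n → Bool) : ℝ :=
  Real.exp (((i : ℕ) : ℝ) * β / M * isingH n h x) *
    ((n.choose (plusCount n x) : ℝ)) ^ ((((i : ℕ) : ℝ) - M) / M)

/-- Normalized entropy-dampening distribution for the mean-field Ising model. -/
noncomputable def isingRho (n M : ℕ) (β h : ℝ) (i : Fin (M+1))
    (x : Fin n → Bool) : ℝ :=
  isingRhoUn n M β h i x / ∑ y : Fin n → Bool, isingRhoUn n M β h i y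

/-- Proposal: flip a uniformly random site to a uniformly random spin. -/
noncomputable def isingProp (n : ℕ) (x y : Fin n → Bool) : ℝ :=
  ((Finset.univ.filter
      (fun vs : Fin n × Bool => Function.update x vs.1 vs.2 = y)).card : ℝ) / (n * 2)

end

/-! ### Product measures and tensorization of the variance -/

/-- Product weight `∏ i, p i (x i)` of a tuple `x`. -/
noncomputable def prodWt {ι E : Type} [Fintype ι] (p : ι → E → ℝ) (x : ι → E) : ℝ :=
  ∏ i, p i (x i)

lemma var_shift {E : Type} [Fintype E] (q : E → ℝ) (hq1 : ∑ a, q a = 1) (f : E → ℝ) (c : ℝ) :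
    ∑ a, q a * (f a - c) ^ 2 =
      (∑ a, q a * f a ^ 2 - (∑ a, q a * f a) ^ 2) + (∑ a, q a * f a - c) ^ 2 := by
  have h : ∀ a, q a * (f a - c) ^ 2 = q a * f a ^ 2 - 2 * c * (q a * f a) + c ^ 2 * q a := by
    intro a; ring
  simp_rw [h]
  rw [sum_add_distrib, sum_sub_distrib, ← mul_sum, ← mul_sum, hq1]
  ring

lemma jensen_sq {E : Type} [Fintype E] (q : E → ℝ) (hq0 : ∀ a, 0 ≤ q a) (hq1 : ∑ a, q a = 1)
    (f : E → ℝ) : (∑ a, q a * f a) ^ 2 ≤ ∑ a, q a * f a ^ 2 := by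
  have h := var_shift q hq1 f (∑ a, q a * f a)
  have h2 : 0 ≤ ∑ a, q a * (f a - ∑ a, q a * f a) ^ 2 :=
    sum_nonneg fun a _ => mul_nonneg (hq0 a) (sq_nonneg _)
  rw [h] at h2
  nlinarith

lemma prodWt_nonneg {ι E : Type} [Fintype ι] {p : ι → E → ℝ} (hp : ∀ i a, 0 ≤ p i a) (x : ι → E) :
    0 ≤ prodWt p x := prod_nonneg fun i _ => hp i _

lemma prodWt_sum {ι E : Type} [Fintype ι] [DecidableEq ι] [Fintype E] {p : ι → E → ℝ}
    (hp1 : ∀ i, ∑ a, p i a = 1) : ∑ x : ι → E, prodWt p x = 1 := by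
  unfold prodWt
  rw [← Fintype.prod_sum]
  simp [hp1]

lemma sum_tuple_cons {E : Type} [Fintype E] {N : ℕ} (Φ : (Fin (N + 1) → E) → ℝ) :
    ∑ x, Φ x = ∑ a, ∑ z : Fin N → E, Φ (Fin.cons a z) := by
  rw [← Fintype.sum_prod_type']
  symm
  exact Fintype.sum_equiv (Fin.consEquiv (fun _ => E)) _ _ (fun x => rfl)

/-- Efron–Stein inequality (tensorization of the variance) for a product of probability weights:
in the `i`-th summand the optimal centring, the conditional mean, is replaced by an arbitrary
function `c i` not depending on the `i`-th coordinate. -/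
theorem efron_stein {E : Type} [Fintype E] : ∀ (N : ℕ) (p : Fin N → E → ℝ)
    (_ : ∀ i a, 0 ≤ p i a) (_ : ∀ i, ∑ a, p i a = 1) (F : (Fin N → E) → ℝ)
    (c : Fin N → (Fin N → E) → ℝ) (_ : ∀ i x a, c i (Function.update x i a) = c i x),
    ∑ x, prodWt p x * F x ^ 2 - (∑ x, prodWt p x * F x) ^ 2 ≤
      ∑ i, ∑ x, prodWt p x * (F x - c i x) ^ 2 := by
  intro N
  induction N with
  | zero => intro p _ _ F c _; simp [prodWt]
  | succ N ih =>
    intro p hp0 hp1 F c hc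
    have hne : Nonempty E := by
      by_contra h
      rw [not_nonempty_iff] at h
      have := hp1 0
      simp at this
    obtain ⟨a0⟩ := hne
    set q : Fin N → E → ℝ := fun i => p i.succ with hq
    have hq0 : ∀ i a, 0 ≤ q i a := fun i a => hp0 _ _
    have hq1 : ∀ i, ∑ a, q i a = 1 := fun i => hp1 _
    have hw : ∀ a z, prodWt p (Fin.cons a z : Fin (N + 1) → E) = p 0 a * prodWt q z := by
      intro a z; simp [prodWt, Fin.prod_univ_succ, hq]
    set m : E → ℝ := fun a => ∑ z, prodWt q z * F (Fin.cons a z) with hm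
    have hF2 : ∑ x, prodWt p x * F x ^ 2 =
        ∑ a, p 0 a * ∑ z, prodWt q z * F (Fin.cons a z) ^ 2 := by
      rw [sum_tuple_cons]; simp_rw [hw, mul_sum, mul_assoc]
    have hF1 : ∑ x, prodWt p x * F x = ∑ a, p 0 a * m a := by
      rw [sum_tuple_cons]; simp_rw [hm, hw, mul_sum, mul_assoc]
    have hc0 : ∀ a z, c 0 (Fin.cons a z : Fin (N + 1) → E) = c 0 (Fin.cons a0 z) := by
      intro a z
      have := hc 0 (Fin.cons a0 z) a
      rwa [Fin.update_cons_zero] at this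
    have hA : ∀ a, ∑ z, prodWt q z * F (Fin.cons a z) ^ 2 - (m a) ^ 2 ≤
        ∑ i : Fin N, ∑ z, prodWt q z * (F (Fin.cons a z) - c i.succ (Fin.cons a z)) ^ 2 := by
      intro a
      refine ih q hq0 hq1 (fun z => F (Fin.cons a z)) (fun i z => c i.succ (Fin.cons a z)) ?_
      intro i z b
      have := hc i.succ (Fin.cons a z) b
      rwa [← Fin.cons_update] at this
    have hB : ∑ a, p 0 a * m a ^ 2 - (∑ a, p 0 a * m a) ^ 2 ≤
        ∑ a, p 0 a * ∑ z, prodWt q z * (F (Fin.cons a z) - c 0 (Fin.cons a z)) ^ 2 := by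
      have h1 := var_shift (p 0) (hp1 0) m (∑ z, prodWt q z * c 0 (Fin.cons a0 z))
      have h2 : ∑ a, p 0 a * (m a - ∑ z, prodWt q z * c 0 (Fin.cons a0 z)) ^ 2 ≤
          ∑ a, p 0 a * ∑ z, prodWt q z * (F (Fin.cons a z) - c 0 (Fin.cons a z)) ^ 2 := by
        refine sum_le_sum fun a _ => mul_le_mul_of_nonneg_left ?_ (hp0 0 a)
        have h3 := jensen_sq (prodWt q) (prodWt_nonneg hq0) (prodWt_sum hq1)
          (fun z => F (Fin.cons a z) - c 0 (Fin.cons a z))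
        refine le_trans (le_of_eq ?_) h3
        simp_rw [hm, hc0 a, mul_sub, sum_sub_distrib]
      nlinarith [sq_nonneg (∑ a, p 0 a * m a - ∑ z, prodWt q z * c 0 (Fin.cons a0 z))]
    have hC : ∑ a, p 0 a * (∑ z, prodWt q z * F (Fin.cons a z) ^ 2 - (m a) ^ 2) ≤
        ∑ a, p 0 a * ∑ i : Fin N, ∑ z, prodWt q z *
          (F (Fin.cons a z) - c i.succ (Fin.cons a z)) ^ 2 :=
      sum_le_sum fun a _ => mul_le_mul_of_nonneg_left (hA a) (hp0 0 a)
    have hR : ∑ i, ∑ x, prodWt p x * (F x - c i x) ^ 2 =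
        ∑ a, p 0 a * ∑ z, prodWt q z * (F (Fin.cons a z) - c 0 (Fin.cons a z)) ^ 2 +
        ∑ a, p 0 a * ∑ i : Fin N, ∑ z, prodWt q z *
          (F (Fin.cons a z) - c i.succ (Fin.cons a z)) ^ 2 := by
      rw [Fin.sum_univ_succ]
      congr 1
      · rw [sum_tuple_cons]; simp_rw [hw, mul_sum, mul_assoc]
      · simp_rw [mul_sum]
        conv_rhs => rw [sum_comm]
        refine sum_congr rfl fun i _ => ?_
        rw [sum_tuple_cons]; simp_rw [hw, mul_assoc]
    rw [hR, hF2, hF1]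
    simp_rw [mul_sub, sum_sub_distrib] at hC
    linarith

lemma prodWt_update {ι E : Type} [Fintype ι] [DecidableEq ι] (p : ι → E → ℝ) (i : ι)
    (q : E → ℝ) (x : ι → E) (a : E) :
    p i (x i) * prodWt (Function.update p i q) (Function.update x i a) = prodWt p x * q a := by
  unfold prodWt
  rw [← mul_prod_erase univ _ (mem_univ i), ← mul_prod_erase univ (fun j => p j (x j)) (mem_univ i)]
  have : ∏ j ∈ univ.erase i, Function.update p i q j (Function.update x i a j) =
      ∏ j ∈ univ.erase i, p j (x j) := by
    refine prod_congr rfl fun j hj => ?_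
    have hj' : j ≠ i := ne_of_mem_erase hj
    simp [hj']
  rw [this]
  simp only [Function.update_self]
  ring

/-- Resampling the `i`-th coordinate of a `p`-distributed tuple from `q` produces the product
measure with `i`-th factor `q`. -/
lemma resample {ι E : Type} [Fintype ι] [DecidableEq ι] [Fintype E] (p : ι → E → ℝ) (i : ι)
    (hp1 : ∑ a, p i a = 1) (q : E → ℝ) (Ψ : (ι → E) → ℝ) :
    ∑ x, prodWt p x * ∑ a, q a * Ψ (Function.update x i a) =
      ∑ x, prodWt (Function.update p i q) x * Ψ x := by
  have hR : ∑ x, prodWt (Function.update p i q) x * Ψ x =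
      ∑ y : (ι → E) × E, p i y.2 * (prodWt (Function.update p i q) y.1 * Ψ y.1) := by
    rw [Fintype.sum_prod_type]
    refine sum_congr rfl fun x _ => ?_
    simp only
    rw [← sum_mul, hp1, one_mul]
  rw [hR]
  simp_rw [mul_sum]
  rw [← Fintype.sum_prod_type']
  have hinv : Function.Involutive
      (fun y : (ι → E) × E => (Function.update y.1 i y.2, y.1 i)) := by
    intro y; simp
  refine Fintype.sum_equiv hinv.toPerm _ _ fun y => ?_
  simp only [Function.Involutive.coe_toPerm]
  rw [← mul_assoc, ← mul_assoc, prodWt_update]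

lemma resample_self {ι E : Type} [Fintype ι] [DecidableEq ι] [Fintype E] (p : ι → E → ℝ) (i : ι)
    (hp1 : ∑ a, p i a = 1) (Ψ : (ι → E) → ℝ) :
    ∑ x, prodWt p x * ∑ a, p i a * Ψ (Function.update x i a) = ∑ x, prodWt p x * Ψ x := by
  rw [resample p i hp1 (p i) Ψ, Function.update_eq_self]

/-! ### Total variation decay from a Poincaré inequality -/

section Mixing
variable {S : Type} [Fintype S] [DecidableEq S]

/-- One step of a reversible chain with holding probability at least `1/4` contracts the
squared `L²(π)` norm of mean-zero functions. The identity `‖f‖² - ‖Pf‖² = ½ ∑ π(x) P²(x,y)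
(f x - f y)²` is combined with `P²(x,y) ≥ P(x,y)/2` off the diagonal. -/
lemma step_contract (P : Matrix S S ℝ) (π : S → ℝ)
    (hπ : ∀ x, 0 < π x) (hP0 : ∀ x y, 0 ≤ P x y)
    (hP1 : ∀ x, ∑ y, P x y = 1) (hrev : ∀ x y, π x * P x y = π y * P y x)
    (hlazy : ∀ x, 1 / 4 ≤ P x x) (C : ℝ) (hC : 0 < C)
    (hgap : ∀ F : S → ℝ, ∑ x, π x * F x ^ 2 - (∑ x, π x * F x) ^ 2 ≤
      C * ∑ x, ∑ y, π x * P x y * (F x - F y) ^ 2)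
    (f : S → ℝ) (hf : ∑ x, π x * f x = 0) :
    ∑ x, π x * (P.mulVec f x) ^ 2 ≤ (1 - 1 / (4 * C)) * ∑ x, π x * f x ^ 2 := by
  have hg := hgap f
  rw [hf] at hg
  have hcol : ∀ y, ∑ x, π x * P x y = π y := by
    intro y
    simp_rw [hrev _ y, ← mul_sum, hP1, mul_one]
  -- the identity for `‖Pf‖²`, written with the intermediate state `z` of a two-step move `x, z, y`
  have hid : ∑ x, π x * f x ^ 2 - ∑ z, π z * (P.mulVec f z) ^ 2 =
      (1 / 2) * ∑ z, ∑ x, ∑ y, π z * P z x * P z y * (f x - f y) ^ 2 := by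
    have e1 : ∀ z, ∑ x, ∑ y, π z * P z x * P z y * (f x - f y) ^ 2 =
        2 * (∑ x, π z * P z x * f x ^ 2) - 2 * (π z * (P.mulVec f z) ^ 2) := by
      intro z
      have a1 : ∀ x, ∑ y, π z * P z x * P z y * (f x - f y) ^ 2 =
          π z * P z x * f x ^ 2 - 2 * (π z * P z x * f x) * P.mulVec f z
            + π z * P z x * ∑ y, P z y * f y ^ 2 := by
        intro x
        have : ∀ y, π z * P z x * P z y * (f x - f y) ^ 2 =
          (π z * P z x * f x ^ 2) * P z y - 2 * (π z * P z x * f x) * (P z y * f y)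
            + π z * P z x * (P z y * f y ^ 2) := by intro y; ring
        simp_rw [this]
        rw [sum_add_distrib, sum_sub_distrib, ← mul_sum, ← mul_sum, ← mul_sum, hP1, mul_one]
        rfl
      simp_rw [a1]
      rw [sum_add_distrib, sum_sub_distrib, ← sum_mul, ← sum_mul, ← mul_sum, ← mul_sum, hP1]
      have : ∑ x, π z * P z x * f x = π z * P.mulVec f z := by
        simp_rw [mul_assoc, ← mul_sum]; rfl
      rw [this]
      have : ∑ x, π z * P z x * f x ^ 2 = π z * ∑ x, P z x * f x ^ 2 := by
        simp_rw [mul_assoc, ← mul_sum]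
      rw [this]
      ring
    simp_rw [e1]
    rw [sum_sub_distrib, ← mul_sum, ← mul_sum, sum_comm]
    simp_rw [← sum_mul, hcol]
    ring
  have hlow : ∑ x, ∑ y, π x * P x y * (f x - f y) ^ 2 ≤
      2 * ∑ z, ∑ x, ∑ y, π z * P z x * P z y * (f x - f y) ^ 2 := by
    -- keep the two-step moves whose intermediate state equals one end
    have hx : ∀ z, (1 / 4) * ∑ y, π z * P z y * (f z - f y) ^ 2 * 2 ≤
        ∑ x, ∑ y, π z * P z x * P z y * (f x - f y) ^ 2 := by
      intro z
      have hpos : ∀ x y, 0 ≤ π z * P z x * P z y * (f x - f y) ^ 2 := fun x y =>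
        mul_nonneg (mul_nonneg (mul_nonneg (hπ z).le (hP0 _ _)) (hP0 _ _)) (sq_nonneg _)
      have hb : ∀ x, (if x = z then ∑ y, π z * P z z * P z y * (f z - f y) ^ 2 else 0) +
          π z * P z x * P z z * (f x - f z) ^ 2 ≤
          ∑ y, π z * P z x * P z y * (f x - f y) ^ 2 := by
        intro x
        by_cases h : x = z
        · subst h; simp
        · rw [if_neg h, zero_add]
          exact single_le_sum (f := fun y => π z * P z x * P z y * (f x - f y) ^ 2)
            (fun y _ => hpos x y) (mem_univ z)
      refine le_trans ?_ (sum_le_sum fun x _ => hb x)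
      rw [sum_add_distrib, sum_ite_eq' univ z, if_pos (mem_univ z), ← sum_add_distrib, mul_sum]
      refine sum_le_sum fun y _ => ?_
      have h1 : 0 ≤ π z * P z y * (f z - f y) ^ 2 :=
        mul_nonneg (mul_nonneg (hπ z).le (hP0 _ _)) (sq_nonneg _)
      nlinarith [mul_le_mul_of_nonneg_right (hlazy z) h1]
    have := sum_le_sum fun z (_ : z ∈ univ) => hx z
    rw [← mul_sum] at this
    simp_rw [← sum_mul] at this
    linarith
  have h3 : ∑ x, π x * f x ^ 2 ≤
      4 * C * (∑ x, π x * f x ^ 2 - ∑ z, π z * (P.mulVec f z) ^ 2) := by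
    rw [hid]
    have := mul_le_mul_of_nonneg_left hlow hC.le
    nlinarith
  have h4 : 1 / (4 * C) * ∑ x, π x * f x ^ 2 ≤
      (∑ x, π x * f x ^ 2 - ∑ z, π z * (P.mulVec f z) ^ 2) := by
    rw [div_mul_eq_mul_div, one_mul, div_le_iff₀ (by positivity)]
    linarith
  linarith

/-- A Poincaré inequality gives exponential convergence in total variation. -/
theorem tv_decay (P : Matrix S S ℝ) (π : S → ℝ)
    (hπ : ∀ x, 0 < π x) (hπ1 : ∑ x, π x = 1) (hP0 : ∀ x y, 0 ≤ P x y)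
    (hP1 : ∀ x, ∑ y, P x y = 1) (hrev : ∀ x y, π x * P x y = π y * P y x)
    (hlazy : ∀ x, 1 / 4 ≤ P x x) (C : ℝ) (hC : 0 < C)
    (hgap : ∀ F : S → ℝ, ∑ x, π x * F x ^ 2 - (∑ x, π x * F x) ^ 2 ≤
      C * ∑ x, ∑ y, π x * P x y * (F x - F y) ^ 2) (t : ℕ) (x : S) :
    (∑ y, |(P ^ t) x y - π y|) ^ 2 ≤ Real.exp (-(t / (4 * C))) / π x := by
  set g : ℕ → S → ℝ := fun t y => (P ^ t) y x / π x - 1 with hg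
  have hrevt : ∀ t : ℕ, ∀ x y, π x * (P ^ t) x y = π y * (P ^ t) y x := by
    intro t
    induction t with
    | zero =>
      intro x y
      by_cases h : x = y
      · subst h; rfl
      · simp [h, Ne.symm h]
    | succ t ih =>
      intro x y
      rw [pow_succ, Matrix.mul_apply]
      conv_rhs => rw [← pow_succ, pow_succ', Matrix.mul_apply]
      rw [mul_sum, mul_sum]
      refine sum_congr rfl fun z _ => ?_
      rw [← mul_assoc, ih, mul_assoc, mul_comm ((P ^ t) z x), ← mul_assoc, hrev, mul_assoc]
  have hstep : ∀ t, P.mulVec (g t) = g (t + 1) := by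
    intro t; funext y
    simp only [hg, Matrix.mulVec, dotProduct, mul_sub, sum_sub_distrib, mul_one, hP1]
    rw [pow_succ', Matrix.mul_apply, sum_div]
    simp_rw [mul_div_assoc]
  have hmean : ∀ t, ∑ y, π y * g t y = 0 := by
    intro t
    induction t with
    | zero =>
      simp only [hg, pow_zero, mul_sub, sum_sub_distrib, mul_one, hπ1]
      simp [Matrix.one_apply, ite_div, (hπ x).ne']
    | succ t ih =>
      rw [← hstep]
      simp only [Matrix.mulVec, dotProduct, mul_sum]
      rw [sum_comm]
      rw [← ih]
      refine sum_congr rfl fun z _ => ?_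
      simp_rw [← mul_assoc, ← sum_mul, hrev _ z, ← mul_sum, hP1, mul_one]
  have hnorm : ∀ t : ℕ, ∑ y, π y * g t y ^ 2 ≤ Real.exp (-(t / (4 * C))) / π x := by
    intro t
    induction t with
    | zero =>
      have : ∑ y, π y * g 0 y ^ 2 = 1 / π x - 1 := by
        have e : ∀ y, π y * g 0 y ^ 2 =
            (if y = x then 1 / π x else 0) - 2 * (if y = x then 1 else 0) + π y := by
          intro y
          by_cases h : y = x
          · subst h
            have := (hπ y).ne'
            simp [hg]; field_simp; ring
          · simp [hg, h]
        simp_rw [e]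
        rw [sum_add_distrib, sum_sub_distrib, ← mul_sum]
        simp [hπ1]; ring
      rw [this]; simp
    | succ t ih =>
      rw [← hstep]
      have h1 := step_contract P π hπ hP0 hP1 hrev hlazy C hC hgap (g t) (hmean t)
      have h0 : 0 ≤ ∑ y, π y * g t y ^ 2 :=
        sum_nonneg fun y _ => mul_nonneg (hπ y).le (sq_nonneg _)
      have h2 : (1 - 1 / (4 * C)) ≤ Real.exp (-(1 / (4 * C))) := by
        have := Real.add_one_le_exp (-(1 / (4 * C))); linarith
      calc _ ≤ _ := h1
        _ ≤ Real.exp (-(1 / (4 * C))) * ∑ y, π y * g t y ^ 2 := by gcongr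
        _ ≤ Real.exp (-(1 / (4 * C))) * (Real.exp (-(t / (4 * C))) / π x) := by gcongr
        _ = _ := by
          rw [← mul_div_assoc, ← Real.exp_add]; congr 2; push_cast; ring
  have habs : ∀ y, |(P ^ t) x y - π y| = π y * |g t y| := by
    intro y
    rw [← abs_of_pos (hπ y), ← abs_mul, abs_of_pos (hπ y)]
    congr 1
    simp only [hg, mul_sub, mul_one]
    rw [mul_div_assoc', ← hrevt, mul_div_cancel_left₀ _ (hπ x).ne']
  simp_rw [habs]
  refine (jensen_sq π (fun y => (hπ y).le) hπ1 _).trans ?_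
  simp_rw [sq_abs]
  exact hnorm t

end Mixing

/-! ### The Dirichlet form of a swapping chain -/

section SwapChain

set_option linter.unusedSectionVars false

variable {E : Type} [Fintype E] [DecidableEq E] {M : ℕ}

lemma swapConfigAt_eq (x : Fin (M + 1) → E) (i : Fin M) :
    swapConfigAt x i = x ∘ Equiv.swap i.castSucc i.succ := by
  funext l
  have hne : i.castSucc ≠ i.succ := Fin.castSucc_lt_succ.ne
  unfold swapConfigAt
  by_cases h1 : l = i.succ
  · subst h1; simp
  · by_cases h2 : l = i.castSucc
    · subst h2; simp [hne]
    · simp [h1, h2, Equiv.swap_apply_of_ne_of_ne]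

lemma swapConfigAt_swapConfigAt (x : Fin (M + 1) → E) (i : Fin M) :
    swapConfigAt (swapConfigAt x i) i = x := by
  rw [swapConfigAt_eq, swapConfigAt_eq]; funext l; simp

lemma swapConfigAt_involutive (i : Fin M) :
    Function.Involutive (fun x : Fin (M + 1) → E => swapConfigAt x i) :=
  fun x => swapConfigAt_swapConfigAt x i

lemma prodWt_swap_split (p : Fin (M + 1) → E → ℝ) (x : Fin (M + 1) → E) (i : Fin M) :
    prodWt p (swapConfigAt x i) * (p i.castSucc (x i.castSucc) * p i.succ (x i.succ)) =
      prodWt p x * (p i.castSucc (x i.succ) * p i.succ (x i.castSucc)) := by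
  have hne : i.succ ≠ i.castSucc := Fin.castSucc_lt_succ.ne'
  have key : ∀ y : Fin (M + 1) → E, prodWt p y = (p i.castSucc (y i.castSucc) *
      p i.succ (y i.succ)) * ∏ l ∈ (univ.erase i.castSucc).erase i.succ, p l (y l) := by
    intro y
    unfold prodWt
    rw [← mul_prod_erase univ _ (mem_univ i.castSucc),
      ← mul_prod_erase (univ.erase i.castSucc) _ (mem_erase.2 ⟨hne, mem_univ _⟩), mul_assoc]
  rw [key, key x]
  have : ∏ l ∈ (univ.erase i.castSucc).erase i.succ, p l (swapConfigAt x i l) =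
      ∏ l ∈ (univ.erase i.castSucc).erase i.succ, p l (x l) := by
    refine prod_congr rfl fun l hl => ?_
    simp only [mem_erase, mem_univ, and_true] at hl
    rw [swapConfigAt_eq, Function.comp, Equiv.swap_apply_of_ne_of_ne hl.2 hl.1]
  rw [this]
  simp only [swapConfigAt_eq, Function.comp, Equiv.swap_apply_left, Equiv.swap_apply_right]
  ring

lemma prodWt_pos {p : Fin (M + 1) → E → ℝ} (hp : ∀ i a, 0 < p i a) (x : Fin (M + 1) → E) :
    0 < prodWt p x := prod_pos fun i _ => hp i _

lemma prodWt_update_state (p : Fin (M + 1) → E → ℝ) (x : Fin (M + 1) → E) (i : Fin (M + 1))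
    (b : E) : p i (x i) * prodWt p (Function.update x i b) = prodWt p x * p i b := by
  have := prodWt_update p i (p i) x b
  rwa [Function.update_eq_self] at this

lemma mul_min_one_div {A a b : ℝ} (hA : 0 < A) :
    A * min 1 (b / a) = min A (A * b / a) := by
  rw [mul_min_of_nonneg _ _ hA.le, mul_one, mul_div_assoc]

lemma prodWt_level_metropolis {p : Fin (M + 1) → E → ℝ} (hp : ∀ i a, 0 < p i a)
    (x : Fin (M + 1) → E) (i : Fin (M + 1)) (b : E) :
    prodWt p x * min 1 (p i b / p i (x i)) =
      min (prodWt p x) (prodWt p (Function.update x i b)) := by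
  rw [mul_min_one_div (prodWt_pos hp x), ← prodWt_update_state,
    mul_div_cancel_left₀ _ (hp _ _).ne']

lemma prodWt_swap_metropolis {p : Fin (M + 1) → E → ℝ} (hp : ∀ i a, 0 < p i a)
    (x : Fin (M + 1) → E) (i : Fin M) :
    prodWt p x * min 1 ((p i.castSucc (x i.succ) * p i.succ (x i.castSucc)) /
          (p i.castSucc (x i.castSucc) * p i.succ (x i.succ))) =
      min (prodWt p x) (prodWt p (swapConfigAt x i)) := by
  have h : 0 < p i.castSucc (x i.castSucc) * p i.succ (x i.succ) := mul_pos (hp _ _) (hp _ _)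
  rw [mul_min_one_div (prodWt_pos hp x), ← prodWt_swap_split, mul_div_cancel_right₀ _ h.ne']

lemma sum_update_ne (x : Fin (M + 1) → E) (i : Fin (M + 1)) (G : (Fin (M + 1) → E) → ℝ) :
    (∑ y, if y = Function.update x i (y i) ∧ y i ≠ x i then G y else 0) =
      ∑ b, if b ≠ x i then G (Function.update x i b) else 0 := by
  have h : ∀ b, (if b ≠ x i then G (Function.update x i b) else 0) =
      ∑ y, if y = Function.update x i b ∧ b ≠ x i then G y else 0 := by
    intro b
    by_cases hb : b ≠ x i
    · simp [hb]
    · simp [hb]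
  simp_rw [h]
  rw [sum_comm]
  refine sum_congr rfl fun y _ => ?_
  rw [Fintype.sum_eq_single (y i)]
  intro b hb
  rw [if_neg]
  rintro ⟨h1, -⟩
  apply hb
  rw [h1]; simp

variable (Q : E → E → ℝ) (p : Fin (M + 1) → E → ℝ)

lemma swapOff_nonneg (hQ0 : ∀ a b, 0 ≤ Q a b) (hp : ∀ i a, 0 < p i a) (x y : Fin (M + 1) → E) :
    0 ≤ swapOff Q p x y := by
  unfold swapOff
  refine add_nonneg (sum_nonneg fun i _ => ?_) (sum_nonneg fun i _ => ?_)
  · split_ifs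
    · have h1 := (hp i (y i)).le
      have h2 := (hp i (x i)).le
      have := hQ0 (x i) (y i)
      positivity
    · exact le_rfl
  · split_ifs
    · have h1 := (hp i.castSucc (x i.succ)).le
      have h2 := (hp i.succ (x i.castSucc)).le
      have h3 := (hp i.castSucc (x i.castSucc)).le
      have h4 := (hp i.succ (x i.succ)).le
      positivity
    · exact le_rfl

lemma swapOff_mul (hp : ∀ i a, 0 < p i a) (x y : Fin (M + 1) → E) :
    prodWt p x * swapOff Q p x y =
    (∑ i : Fin (M + 1), if y = Function.update x i (y i) ∧ y i ≠ x i then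
      (1 / (2 * ((M : ℝ) + 1))) * Q (x i) (y i) * min (prodWt p x) (prodWt p y) else 0) +
    (∑ i : Fin M, if y = swapConfigAt x i then
      (1 / (2 * (M : ℝ))) * min (prodWt p x) (prodWt p y) else 0) := by
  unfold swapOff
  rw [mul_add, mul_sum, mul_sum]
  congr 1
  · refine sum_congr rfl fun i _ => ?_
    split_ifs with h
    · have := prodWt_level_metropolis hp x i (y i)
      rw [← h.1] at this
      rw [← this]; ring
    · simp
  · refine sum_congr rfl fun i _ => ?_
    split_ifs with h
    · have := prodWt_swap_metropolis hp x i
      rw [← h] at this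
      rw [← this]; ring
    · simp

lemma swapOff_rev (hQs : ∀ a b, Q a b = Q b a) (hp : ∀ i a, 0 < p i a)
    (x y : Fin (M + 1) → E) :
    prodWt p x * swapOff Q p x y = prodWt p y * swapOff Q p y x := by
  rw [swapOff_mul Q p hp, swapOff_mul Q p hp]
  congr 1
  · refine sum_congr rfl fun i _ => ?_
    have : (y = Function.update x i (y i) ∧ y i ≠ x i) ↔
        (x = Function.update y i (x i) ∧ x i ≠ y i) := by
      constructor
      · rintro ⟨h1, h2⟩
        refine ⟨?_, h2.symm⟩
        rw [h1]; simp
      · rintro ⟨h1, h2⟩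
        refine ⟨?_, h2.symm⟩
        rw [h1]; simp
    simp only [this, hQs (x i) (y i), min_comm (prodWt p x)]
  · refine sum_congr rfl fun i _ => ?_
    have : (y = swapConfigAt x i) ↔ (x = swapConfigAt y i) := by
      constructor
      · intro h; rw [h, swapConfigAt_swapConfigAt]
      · intro h; rw [h, swapConfigAt_swapConfigAt]
    simp only [this, min_comm (prodWt p x)]

lemma swapOff_sum_le (hQ0 : ∀ a b, 0 ≤ Q a b)
    (hQh : ∀ a, ∑ b, (if b ≠ a then Q a b else 0) ≤ 1 / 2) (hM : 0 < M) (x : Fin (M + 1) → E) :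
    ∑ z, swapOff Q p x z ≤ 3 / 4 := by
  unfold swapOff
  rw [sum_add_distrib]
  have h1 : ∑ z : Fin (M + 1) → E, (∑ i : Fin (M + 1),
      if z = Function.update x i (z i) ∧ z i ≠ x i then
      (1 / (2 * ((M : ℝ) + 1))) * Q (x i) (z i) * min 1 (p i (z i) / p i (x i)) else 0)
      ≤ 1 / 4 := by
    rw [sum_comm]
    have : ∀ i : Fin (M + 1), (∑ z : Fin (M + 1) → E,
        if z = Function.update x i (z i) ∧ z i ≠ x i then
        (1 / (2 * ((M : ℝ) + 1))) * Q (x i) (z i) * min 1 (p i (z i) / p i (x i)) else 0) ≤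
        (1 / (2 * ((M : ℝ) + 1))) * (1 / 2) := by
      intro i
      rw [sum_update_ne x i (fun z => (1 / (2 * ((M : ℝ) + 1))) * Q (x i) (z i) *
        min 1 (p i (z i) / p i (x i)))]
      refine le_trans ?_ (mul_le_mul_of_nonneg_left (hQh (x i)) (by positivity))
      rw [mul_sum]
      refine sum_le_sum fun b _ => ?_
      split_ifs
      · simp only [Function.update_self]
        have := hQ0 (x i) b
        exact mul_le_of_le_one_right (by positivity) (min_le_left _ _)
      · simp
    refine (sum_le_sum fun i _ => this i).trans ?_
    rw [sum_const, card_univ, Fintype.card_fin, nsmul_eq_mul]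
    push_cast
    field_simp
    norm_num
  have h2 : ∑ z : Fin (M + 1) → E, (∑ i : Fin M, if z = swapConfigAt x i then
      (1 / (2 * (M : ℝ))) * min 1
        ((p i.castSucc (x i.succ) * p i.succ (x i.castSucc)) /
          (p i.castSucc (x i.castSucc) * p i.succ (x i.succ))) else 0) ≤ 1 / 2 := by
    rw [sum_comm]
    have : ∀ i : Fin M, (∑ z : Fin (M + 1) → E, if z = swapConfigAt x i then
      (1 / (2 * (M : ℝ))) * min 1
        ((p i.castSucc (x i.succ) * p i.succ (x i.castSucc)) /
          (p i.castSucc (x i.castSucc) * p i.succ (x i.succ))) else 0) ≤ 1 / (2 * (M : ℝ)) := by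
      intro i
      simp only [sum_ite_eq', mem_univ, if_true]
      exact mul_le_of_le_one_right (by positivity) (min_le_left _ _)
    refine (sum_le_sum fun i _ => this i).trans ?_
    rw [sum_const, card_univ, Fintype.card_fin, nsmul_eq_mul]
    have : (0 : ℝ) < M := by exact_mod_cast hM
    field_simp
    exact le_rfl
  linarith

/-- Dirichlet form of the Metropolis chain with proposal `Q` and target `ρ` on one level
(each unordered pair is counted twice). -/
noncomputable def levelForm (Q : E → E → ℝ) (ρ : E → ℝ) (g : E → ℝ) : ℝ :=
  ∑ a, ∑ b, Q a b * min (ρ a) (ρ b) * (g a - g b) ^ 2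

/-- The stationary average of the level Dirichlet forms, summed over the levels; in the `i`-th
summand all coordinates of `x` but the `i`-th are frozen. -/
noncomputable def levelEnergy (Q : E → E → ℝ) (p : Fin (M + 1) → E → ℝ)
    (F : (Fin (M + 1) → E) → ℝ) : ℝ :=
  ∑ i, ∑ x, prodWt p x * levelForm Q (p i) (fun a => F (Function.update x i a))

/-- The part of the Dirichlet form coming from exchanging coordinates `j` and `j + 1`. -/
noncomputable def swapEnergyAt (p : Fin (M + 1) → E → ℝ) (F : (Fin (M + 1) → E) → ℝ)
    (j : Fin M) : ℝ :=
  ∑ x, min (prodWt p x) (prodWt p (swapConfigAt x j)) * (F x - F (swapConfigAt x j)) ^ 2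

lemma levelEnergy_eq (hp : ∀ i a, 0 < p i a) (hp1 : ∀ i, ∑ a, p i a = 1)
    (F : (Fin (M + 1) → E) → ℝ) :
    levelEnergy Q p F = ∑ i, ∑ x, ∑ b, Q (x i) b *
      min (prodWt p x) (prodWt p (Function.update x i b)) *
        (F x - F (Function.update x i b)) ^ 2 := by
  unfold levelEnergy
  refine sum_congr rfl fun i _ => ?_
  have e : ∀ x : Fin (M + 1) → E, levelForm Q (p i) (fun a => F (Function.update x i a)) =
      ∑ a, p i a * (fun y : Fin (M + 1) → E => ∑ b, Q (y i) b * min 1 (p i b / p i (y i)) *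
        (F y - F (Function.update y i b)) ^ 2) (Function.update x i a) := by
    intro x
    unfold levelForm
    refine sum_congr rfl fun a _ => ?_
    simp only [Function.update_self, Function.update_idem, mul_sum]
    refine sum_congr rfl fun b _ => ?_
    have : p i a * min 1 (p i b / p i a) = min (p i a) (p i b) := by
      rw [mul_min_one_div (hp _ _), mul_div_cancel_left₀ _ (hp _ _).ne']
    rw [← this]; ring
  refine (sum_congr rfl fun x _ => congrArg (fun r => prodWt p x * r) (e x)).trans ?_
  refine (resample_self p i (hp1 i) (fun y => ∑ b, Q (y i) b * min 1 (p i b / p i (y i)) *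
    (F y - F (Function.update y i b)) ^ 2)).trans ?_
  refine sum_congr rfl fun x _ => ?_
  rw [mul_sum]
  refine sum_congr rfl fun b _ => ?_
  rw [← prodWt_level_metropolis hp]; ring

/-- The Dirichlet form of the swapping chain dominates the level and swap energies up to the
probability of selecting a level or a pair of levels. -/
lemma dirichlet_lower (hp : ∀ i a, 0 < p i a)
    (hp1 : ∀ i, ∑ a, p i a = 1) (hM : 0 < M) (F : (Fin (M + 1) → E) → ℝ) :
    levelEnergy Q p F + ∑ j, swapEnergyAt p F j ≤
      2 * ((M : ℝ) + 1) * ∑ x, ∑ y, prodWt p x * swapChain Q p x y * (F x - F y) ^ 2 := by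
  have hM' : (0 : ℝ) < M := by exact_mod_cast hM
  have e : ∀ x y, prodWt p x * swapChain Q p x y * (F x - F y) ^ 2 =
      prodWt p x * swapOff Q p x y * (F x - F y) ^ 2 := by
    intro x y
    by_cases h : y = x
    · subst h; simp
    · simp [swapChain, h]
  simp_rw [e, swapOff_mul Q p hp, add_mul, sum_add_distrib]
  rw [mul_add]
  refine add_le_add (le_of_eq ?_) ?_
  · rw [levelEnergy_eq Q p hp hp1]
    simp_rw [sum_mul]
    have : ∀ x : Fin (M + 1) → E, (∑ y, ∑ i, (if y = Function.update x i (y i) ∧ y i ≠ x i then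
        (1 / (2 * ((M : ℝ) + 1))) * Q (x i) (y i) * min (prodWt p x) (prodWt p y) else 0) *
          (F x - F y) ^ 2) = ∑ i, (1 / (2 * ((M : ℝ) + 1))) * ∑ b, Q (x i) b *
      min (prodWt p x) (prodWt p (Function.update x i b)) *
        (F x - F (Function.update x i b)) ^ 2 := by
      intro x
      rw [sum_comm]
      refine sum_congr rfl fun i _ => ?_
      simp_rw [ite_mul, zero_mul]
      rw [sum_update_ne x i (fun y => (1 / (2 * ((M : ℝ) + 1))) * Q (x i) (y i) *
        min (prodWt p x) (prodWt p y) * (F x - F y) ^ 2), mul_sum]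
      refine sum_congr rfl fun b _ => ?_
      split_ifs with hb
      · simp only [Function.update_self]; ring
      · push Not at hb
        subst hb; simp
    simp_rw [this, ← mul_sum]
    rw [sum_comm]
    field_simp
  · simp_rw [sum_mul]
    have : ∀ x : Fin (M + 1) → E, (∑ y, ∑ i : Fin M, (if y = swapConfigAt x i then
        (1 / (2 * (M : ℝ))) * min (prodWt p x) (prodWt p y) else 0) * (F x - F y) ^ 2) =
        ∑ i : Fin M, (1 / (2 * (M : ℝ))) * (min (prodWt p x) (prodWt p (swapConfigAt x i)) *
          (F x - F (swapConfigAt x i)) ^ 2) := by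
      intro x
      rw [sum_comm]
      refine sum_congr rfl fun i _ => ?_
      simp_rw [ite_mul, zero_mul]
      rw [sum_ite_eq', if_pos (mem_univ _)]
      ring
    simp_rw [this, ← mul_sum]
    rw [sum_comm]
    have hS : 0 ≤ ∑ j, swapEnergyAt p F j := by
      refine sum_nonneg fun j _ => sum_nonneg fun x _ => ?_
      have h1 := (prodWt_pos hp x).le
      have h2 := (prodWt_pos hp (swapConfigAt x j)).le
      positivity
    unfold swapEnergyAt at hS ⊢
    rw [← mul_assoc]
    refine le_mul_of_one_le_left hS ?_
    rw [mul_one_div, le_div_iff₀ (by positivity)]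
    linarith

/-- A Poincaré inequality in terms of level and swap energies bounds the distance of the
swapping chain from stationarity. -/
theorem swapChain_tv_decay (hQ0 : ∀ a b, 0 ≤ Q a b) (hQs : ∀ a b, Q a b = Q b a)
    (hQh : ∀ a, ∑ b, (if b ≠ a then Q a b else 0) ≤ 1 / 2) (hp : ∀ i a, 0 < p i a)
    (hp1 : ∀ i, ∑ a, p i a = 1) (hM : 0 < M) (C : ℝ) (hC : 0 < C)
    (hgap : ∀ F : (Fin (M + 1) → E) → ℝ,
      ∑ x, prodWt p x * F x ^ 2 - (∑ x, prodWt p x * F x) ^ 2 ≤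
      C * (levelEnergy Q p F + ∑ j, swapEnergyAt p F j)) (t : ℕ) (x : Fin (M + 1) → E) :
    (∑ y, |(swapChain Q p ^ t) x y - prodWt p y|) ^ 2 ≤
      Real.exp (-(t / (4 * (C * (2 * ((M : ℝ) + 1)))))) / prodWt p x := by
  have hself : ∀ x, swapChain Q p x x = 1 - ∑ z ∈ univ.erase x, swapOff Q p x z := by
    intro x; simp [swapChain]
  have hoff : ∀ x y, y ≠ x → swapChain Q p x y = swapOff Q p x y := by
    intro x y h; simp [swapChain, h]
  have hle : ∀ x, ∑ z ∈ univ.erase x, swapOff Q p x z ≤ 3 / 4 := fun x =>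
    (sum_le_sum_of_subset_of_nonneg (erase_subset _ _)
      (fun z _ _ => swapOff_nonneg Q p hQ0 hp x z)).trans (swapOff_sum_le Q p hQ0 hQh hM x)
  have hlazy : ∀ x, 1 / 4 ≤ swapChain Q p x x := by
    intro x; rw [hself]; linarith [hle x]
  refine tv_decay (swapChain Q p) (prodWt p) (prodWt_pos hp) (prodWt_sum hp1) ?_ ?_ ?_ hlazy
    (C * (2 * ((M : ℝ) + 1))) (by positivity) ?_ t x
  · intro x y
    by_cases h : y = x
    · subst h; linarith [hlazy y]
    · rw [hoff x y h]; exact swapOff_nonneg Q p hQ0 hp x y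
  · intro x
    rw [← add_sum_erase univ _ (mem_univ x), hself]
    rw [sum_congr rfl fun y hy => hoff x y (ne_of_mem_erase hy)]
    ring
  · intro x y
    by_cases h : y = x
    · subst h; rfl
    · rw [hoff x y h, hoff y x (Ne.symm h)]; exact swapOff_rev Q p hQs hp x y
  · intro F
    refine (hgap F).trans ?_
    rw [mul_assoc]
    exact mul_le_mul_of_nonneg_left (dirichlet_lower Q p hp hp1 hM F) hC.le

end SwapChain

/-! ### Swapping chains of two-mode families -/

section TwoModes

variable {E : Type} [Fintype E] [DecidableEq E] {M : ℕ}

/-- Mass of the mode `b` under the `i`-th distribution. -/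
noncomputable def modeWt (p : Fin (M + 1) → E → ℝ) (m : E → Bool) (i : Fin (M + 1)) (b : Bool) : ℝ :=
  ∑ a, if m a = b then p i a else 0

/-- The `i`-th distribution conditioned on the mode `b`. -/
noncomputable def condWt (p : Fin (M + 1) → E → ℝ) (m : E → Bool) (i : Fin (M + 1)) (b : Bool)
    (a : E) : ℝ :=
  (if m a = b then p i a else 0) / modeWt p m i b

/-- The product measure conditioned on the mode of every coordinate, `s i` being the mode of
coordinate `i`. -/
noncomputable def modeLaw (p : Fin (M + 1) → E → ℝ) (m : E → Bool) (s : Fin (M + 1) → Bool) :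
    (Fin (M + 1) → E) → ℝ :=
  prodWt fun i => condWt p m i (s i)

/-- Conditional expectation of `F` given the modes `s` of the coordinates. -/
noncomputable def modeMean (p : Fin (M + 1) → E → ℝ) (m : E → Bool)
    (F : (Fin (M + 1) → E) → ℝ) (s : Fin (M + 1) → Bool) : ℝ :=
  ∑ x, modeLaw p m s x * F x

/-- The hypotheses on a two-mode tempering family: every level mixes inside each mode, level `0`
mixes globally, consecutive distributions are comparable, and the mass of the mode `true` does not
decrease along the levels and is never much smaller than that of `false`. -/
structure TwoModes (Q : E → E → ℝ) (p : Fin (M + 1) → E → ℝ) (m : E → Bool)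
    (C K B : ℝ) : Prop where
  prop_nonneg : ∀ a b, 0 ≤ Q a b
  pos : ∀ i a, 0 < p i a
  sum_one : ∀ i, ∑ a, p i a = 1
  one_le_K : 1 ≤ K
  B_nonneg : 0 ≤ B
  C_nonneg : 0 ≤ C
  local_poincare : ∀ i (g : E → ℝ), ∃ c : Bool → ℝ,
    ∑ a, p i a * (g a - c (m a)) ^ 2 ≤ C * levelForm Q (p i) g
  hot_poincare : ∀ g : E → ℝ, ∃ c : ℝ, ∑ a, p 0 a * (g a - c) ^ 2 ≤ C * levelForm Q (p 0) g
  ratio_up : ∀ (j : Fin M) a, p j.succ a ≤ K * p j.castSucc a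
  ratio_down : ∀ (j : Fin M) a, p j.castSucc a ≤ K * p j.succ a
  mode_pos : ∀ i b, 0 < modeWt p m i b
  mono : ∀ j : Fin M, modeWt p m j.castSucc true ≤ modeWt p m j.succ true
  balance : ∀ i, modeWt p m i false ≤ B * modeWt p m i true

set_option linter.unusedSectionVars false

lemma modeWt_sum (p : Fin (M + 1) → E → ℝ) (m : E → Bool) (i : Fin (M + 1)) :
    ∑ b, modeWt p m i b = ∑ a, p i a := by
  unfold modeWt
  rw [sum_comm]
  refine sum_congr rfl fun a _ => ?_
  rw [sum_ite_eq univ (m a) (fun _ => p i a), if_pos (mem_univ _)]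

lemma mode_mass_mul (p : Fin (M + 1) → E → ℝ) (m : E → Bool) (hw : ∀ i b, 0 < modeWt p m i b)
    (s : Fin (M + 1) → Bool) (x : Fin (M + 1) → E) :
    prodWt (modeWt p m) s * modeLaw p m s x = if m ∘ x = s then prodWt p x else 0 := by
  unfold modeLaw prodWt
  rw [← prod_mul_distrib]
  have e : ∀ i, modeWt p m i (s i) * condWt p m i (s i) (x i) =
      if m (x i) = s i then p i (x i) else 0 := by
    intro i
    unfold condWt
    rw [mul_div_cancel₀ _ (hw _ _).ne']
  simp_rw [e]
  split_ifs with h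
  · refine prod_congr rfl fun i _ => ?_
    exact if_pos (congrFun h i)
  · have : ∃ i, m (x i) ≠ s i := by
      by_contra hc
      push Not at hc
      exact h (funext hc)
    obtain ⟨i, hi⟩ := this
    exact prod_eq_zero (mem_univ i) (if_neg hi)

/-- Averaging over modes and then over the conditional laws is averaging over the product
measure. -/
lemma mode_mixture (p : Fin (M + 1) → E → ℝ) (m : E → Bool) (hw : ∀ i b, 0 < modeWt p m i b)
    (Φ : (Fin (M + 1) → Bool) → (Fin (M + 1) → E) → ℝ) :
    ∑ s, prodWt (modeWt p m) s * ∑ x, modeLaw p m s x * Φ s x =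
      ∑ x, prodWt p x * Φ (m ∘ x) x := by
  simp_rw [mul_sum, ← mul_assoc, mode_mass_mul p m hw]
  rw [sum_comm]
  refine sum_congr rfl fun x _ => ?_
  simp_rw [ite_mul, zero_mul]
  rw [sum_ite_eq univ, if_pos (mem_univ _)]

lemma condWt_sum (p : Fin (M + 1) → E → ℝ) (m : E → Bool) (hw : ∀ i b, 0 < modeWt p m i b)
    (i : Fin (M + 1)) (b : Bool) : ∑ a, condWt p m i b a = 1 := by
  unfold condWt
  rw [← sum_div]
  exact div_self (hw i b).ne'

lemma prodWt_swap_le {p : Fin (M + 1) → E → ℝ} (hp : ∀ i a, 0 < p i a) {K : ℝ} (hK : 1 ≤ K)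
    (hu : ∀ (j : Fin M) a, p j.succ a ≤ K * p j.castSucc a)
    (hd : ∀ (j : Fin M) a, p j.castSucc a ≤ K * p j.succ a) (x : Fin (M + 1) → E) (j : Fin M) :
    prodWt p (swapConfigAt x j) ≤ K ^ 2 * prodWt p x := by
  have h := prodWt_swap_split p x j
  have hpos : 0 < p j.castSucc (x j.castSucc) * p j.succ (x j.succ) := mul_pos (hp _ _) (hp _ _)
  refine le_of_mul_le_mul_right ?_ hpos
  rw [h]
  have h2 : p j.castSucc (x j.succ) * p j.succ (x j.castSucc) ≤
      (K * p j.succ (x j.succ)) * (K * p j.castSucc (x j.castSucc)) :=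
    mul_le_mul (hd _ _) (hu _ _) (hp _ _).le (mul_nonneg (by linarith) (hp _ _).le)
  have := mul_le_mul_of_nonneg_left h2 (prodWt_pos hp x).le
  linarith

/-- Setting the bit `c` to `true` is injective on the configurations with bit `c` equal to
`false`. -/
lemma sum_set_true_le (c : Fin (M + 1)) (T : (Fin (M + 1) → Bool) → ℝ) (hT : ∀ u, 0 ≤ T u) :
    ∑ s, (if s c = false then T (Function.update s c true) else 0) ≤ ∑ u, T u := by
  have hinv : Function.Involutive
      (fun s : Fin (M + 1) → Bool => Function.update s c (!(s c))) := by
    intro s; simp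
  have : ∑ s, (if s c = false then T (Function.update s c true) else 0) =
      ∑ u, if u c = true then T u else 0 := by
    refine Fintype.sum_equiv hinv.toPerm _ _ fun s => ?_
    simp only [Function.Involutive.coe_toPerm, Function.update_self]
    by_cases h : s c = false
    · simp [h]
    · simp [h]
  rw [this]
  refine sum_le_sum fun u _ => ?_
  split_ifs
  · exact le_rfl
  · exact hT u

lemma three_sq_le {N : ℝ} (hN : 0 < N) (a b c : ℝ) :
    (a + b + c) ^ 2 ≤ (1 + 1 / N) * b ^ 2 + 2 * (1 + N) * (a ^ 2 + c ^ 2) := by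
  have h1 : 2 * ((a + c) * b) ≤ (1 / N) * b ^ 2 + N * (a + c) ^ 2 := by
    have : 0 ≤ (1 / N) * (b - N * (a + c)) ^ 2 := by positivity
    have e : (1 / N) * (b - N * (a + c)) ^ 2 =
        (1 / N) * b ^ 2 - 2 * ((a + c) * b) + N * (a + c) ^ 2 := by
      field_simp; ring
    linarith
  have h2 : (a + c) ^ 2 ≤ 2 * (a ^ 2 + c ^ 2) := by nlinarith [sq_nonneg (a - c)]
  nlinarith

variable {Q : E → E → ℝ} {p : Fin (M + 1) → E → ℝ} {m : E → Bool} {C K B : ℝ}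

lemma TwoModes.condWt_nonneg (H : TwoModes Q p m C K B) (i : Fin (M + 1)) (b : Bool) (a : E) :
    0 ≤ condWt p m i b a := by
  unfold condWt
  refine div_nonneg ?_ (H.mode_pos i b).le
  split_ifs
  · exact (H.pos i a).le
  · exact le_rfl

lemma TwoModes.modeLaw_nonneg (H : TwoModes Q p m C K B) (s : Fin (M + 1) → Bool)
    (x : Fin (M + 1) → E) : 0 ≤ modeLaw p m s x :=
  prodWt_nonneg (fun i => H.condWt_nonneg i (s i)) x

lemma TwoModes.modeLaw_sum (H : TwoModes Q p m C K B) (s : Fin (M + 1) → Bool) :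
    ∑ x, modeLaw p m s x = 1 :=
  prodWt_sum fun i => condWt_sum p m H.mode_pos i (s i)

/-- The average over modes of the conditional variance of `F` given the modes. -/
noncomputable def withinVar (p : Fin (M + 1) → E → ℝ) (m : E → Bool)
    (F : (Fin (M + 1) → E) → ℝ) : ℝ :=
  ∑ s, prodWt (modeWt p m) s * (∑ x, modeLaw p m s x * F x ^ 2 - modeMean p m F s ^ 2)

lemma TwoModes.withinVar_le (H : TwoModes Q p m C K B) (F : (Fin (M + 1) → E) → ℝ) :
    withinVar p m F ≤ C * levelEnergy Q p F := by
  choose c hc using H.local_poincare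
  have h1 : ∀ s : Fin (M + 1) → Bool,
      ∑ x, modeLaw p m s x * F x ^ 2 - modeMean p m F s ^ 2 ≤
      ∑ x, modeLaw p m s x *
        ∑ i, (F x - c i (fun a => F (Function.update x i a)) (s i)) ^ 2 := by
    intro s
    have := efron_stein (M + 1) (fun i => condWt p m i (s i))
      (fun i => H.condWt_nonneg i (s i)) (fun i => condWt_sum p m H.mode_pos i (s i)) F
      (fun i x => c i (fun a => F (Function.update x i a)) (s i)) (by intro i x a; simp)
    refine this.trans (le_of_eq ?_)
    rw [sum_comm]
    simp_rw [mul_sum]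
    rfl
  have h2 : withinVar p m F ≤ ∑ s, prodWt (modeWt p m) s * ∑ x, modeLaw p m s x *
        ∑ i, (F x - c i (fun a => F (Function.update x i a)) (s i)) ^ 2 :=
    sum_le_sum fun s _ => mul_le_mul_of_nonneg_left (h1 s)
      (prodWt_nonneg (fun i b => (H.mode_pos i b).le) s)
  rw [mode_mixture p m H.mode_pos (fun s x =>
    ∑ i, (F x - c i (fun a => F (Function.update x i a)) (s i)) ^ 2)] at h2
  refine h2.trans ?_
  unfold levelEnergy
  simp_rw [mul_sum]
  rw [sum_comm]
  refine sum_le_sum fun i _ => ?_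
  rw [← resample_self p i (H.sum_one i)
    (fun y => (F y - c i (fun a => F (Function.update y i a)) ((m ∘ y) i)) ^ 2)]
  refine sum_le_sum fun x _ => ?_
  have := mul_le_mul_of_nonneg_left (hc i (fun a => F (Function.update x i a)))
    (prodWt_pos H.pos x).le
  simp only [Function.comp, Function.update_self, Function.update_idem]
  linarith

/-- Dirichlet form, with respect to the law of the modes, of exchanging the modes of the
coordinates `j` and `j + 1`. -/
noncomputable def modeSwapEnergy (p : Fin (M + 1) → E → ℝ) (m : E → Bool)
    (F : (Fin (M + 1) → E) → ℝ) (j : Fin M) : ℝ :=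
  ∑ u, min (prodWt (modeWt p m) u) (prodWt (modeWt p m) (swapConfigAt u j)) *
    (modeMean p m F u - modeMean p m F (swapConfigAt u j)) ^ 2

lemma TwoModes.modeWt_ratio_up (H : TwoModes Q p m C K B) (j : Fin M) (b : Bool) :
    modeWt p m j.succ b ≤ K * modeWt p m j.castSucc b := by
  unfold modeWt
  rw [mul_sum]
  refine sum_le_sum fun a _ => ?_
  split_ifs
  · exact H.ratio_up j a
  · simp

lemma TwoModes.modeWt_ratio_down (H : TwoModes Q p m C K B) (j : Fin M) (b : Bool) :
    modeWt p m j.castSucc b ≤ K * modeWt p m j.succ b := by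
  unfold modeWt
  rw [mul_sum]
  refine sum_le_sum fun a _ => ?_
  split_ifs
  · exact H.ratio_down j a
  · simp

/-- Exchanging two adjacent modes changes the conditional mean of `F` by an amount controlled by
the conditional variance and by the genuine swap moves, because the two conditional laws have
bounded relative density after the exchange. -/
lemma TwoModes.modeSwapEnergy_le (H : TwoModes Q p m C K B) (F : (Fin (M + 1) → E) → ℝ)
    (j : Fin M) :
    modeSwapEnergy p m F j ≤ 2 * K ^ 4 * withinVar p m F + 2 * K ^ 4 * swapEnergyAt p F j := by
  have hK0 : 0 ≤ K := le_trans zero_le_one H.one_le_K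
  set W := prodWt (modeWt p m) with hW
  have hWpos : ∀ s, 0 < W s := prodWt_pos H.mode_pos
  have hlaw : ∀ u x, W (swapConfigAt u j) * modeLaw p m (swapConfigAt u j) (swapConfigAt x j) =
      if m ∘ x = u then prodWt p (swapConfigAt x j) else 0 := by
    intro u x
    rw [hW, mode_mass_mul p m H.mode_pos]
    congr 1
    rw [eq_iff_iff]
    have e : m ∘ swapConfigAt x j = swapConfigAt (m ∘ x) j := by
      simp only [swapConfigAt_eq]; rfl
    rw [e]
    exact (swapConfigAt_involutive j).injective.eq_iff
  have hdens : ∀ u x, modeLaw p m (swapConfigAt u j) (swapConfigAt x j) ≤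
      K ^ 4 * modeLaw p m u x := by
    intro u x
    refine le_of_mul_le_mul_left ?_ (hWpos (swapConfigAt u j))
    rw [hlaw]
    have h1 : (if m ∘ x = u then prodWt p (swapConfigAt x j) else 0) ≤
        K ^ 2 * (W u * modeLaw p m u x) := by
      rw [hW, mode_mass_mul p m H.mode_pos]
      split_ifs
      · exact prodWt_swap_le H.pos H.one_le_K H.ratio_up H.ratio_down x j
      · simp
    have h2 : W u ≤ K ^ 2 * W (swapConfigAt u j) := by
      have := prodWt_swap_le H.mode_pos H.one_le_K H.modeWt_ratio_up H.modeWt_ratio_down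
        (swapConfigAt u j) j
      rwa [swapConfigAt_swapConfigAt] at this
    have h3 := mul_le_mul_of_nonneg_right h2 (H.modeLaw_nonneg u x)
    have h4 := mul_le_mul_of_nonneg_left h3 (sq_nonneg K)
    refine h1.trans (h4.trans (le_of_eq (by ring)))
  have hmain : ∀ u, min (W u) (W (swapConfigAt u j)) *
      (modeMean p m F u - modeMean p m F (swapConfigAt u j)) ^ 2 ≤
      2 * K ^ 4 * (W u * (∑ x, modeLaw p m u x * F x ^ 2 - modeMean p m F u ^ 2)) +
      2 * K ^ 4 * ∑ x, (if m ∘ x = u then min (prodWt p x) (prodWt p (swapConfigAt x j)) *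
        (F x - F (swapConfigAt x j)) ^ 2 else 0) := by
    intro u
    set ν : (Fin (M + 1) → E) → ℝ :=
      fun x => modeLaw p m (swapConfigAt u j) (swapConfigAt x j) with hν
    have hν0 : ∀ x, 0 ≤ ν x := fun x => H.modeLaw_nonneg _ _
    have hν1 : ∑ x, ν x = 1 := by
      rw [← H.modeLaw_sum (swapConfigAt u j)]
      exact Fintype.sum_equiv (swapConfigAt_involutive j).toPerm _ _ fun x => rfl
    have hmean : modeMean p m F (swapConfigAt u j) = ∑ x, ν x * F (swapConfigAt x j) := by
      symm
      exact Fintype.sum_equiv (swapConfigAt_involutive j).toPerm _ _ fun x => rfl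
    have hsplit : modeMean p m F u - modeMean p m F (swapConfigAt u j) =
        -(∑ x, ν x * (F x - modeMean p m F u)) + ∑ x, ν x * (F x - F (swapConfigAt x j)) := by
      rw [hmean]
      simp_rw [mul_sub, sum_sub_distrib]
      rw [← sum_mul, hν1]
      ring
    have hj1 := jensen_sq ν hν0 hν1 (fun x => F x - modeMean p m F u)
    have hj2 := jensen_sq ν hν0 hν1 (fun x => F x - F (swapConfigAt x j))
    have hsq : (modeMean p m F u - modeMean p m F (swapConfigAt u j)) ^ 2 ≤
        2 * ∑ x, ν x * (F x - modeMean p m F u) ^ 2 +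
        2 * ∑ x, ν x * (F x - F (swapConfigAt x j)) ^ 2 := by
      rw [hsplit]
      nlinarith [sq_nonneg ((∑ x, ν x * (F x - modeMean p m F u)) +
        ∑ x, ν x * (F x - F (swapConfigAt x j)))]
    have hv : ∑ x, ν x * (F x - modeMean p m F u) ^ 2 ≤
        K ^ 4 * (∑ x, modeLaw p m u x * F x ^ 2 - modeMean p m F u ^ 2) := by
      have h1 := var_shift (modeLaw p m u) (H.modeLaw_sum u) F (modeMean p m F u)
      have h2 : ∑ x, modeLaw p m u x * F x = modeMean p m F u := rfl
      rw [h2, sub_self] at h1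
      have h3 : ∑ x, modeLaw p m u x * (F x - modeMean p m F u) ^ 2 =
        ∑ x, modeLaw p m u x * F x ^ 2 - modeMean p m F u ^ 2 := by linarith
      rw [← h3, mul_sum]
      refine sum_le_sum fun x _ => ?_
      rw [← mul_assoc]
      exact mul_le_mul_of_nonneg_right (hdens u x) (sq_nonneg _)
    have hmin0 : 0 ≤ min (W u) (W (swapConfigAt u j)) := le_min (hWpos _).le (hWpos _).le
    have hvar0 : 0 ≤ ∑ x, ν x * (F x - modeMean p m F u) ^ 2 :=
      sum_nonneg fun x _ => mul_nonneg (hν0 x) (sq_nonneg _)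
    have t1 : min (W u) (W (swapConfigAt u j)) * ∑ x, ν x * (F x - modeMean p m F u) ^ 2 ≤
        K ^ 4 * (W u * (∑ x, modeLaw p m u x * F x ^ 2 - modeMean p m F u ^ 2)) := by
      calc _ ≤ W u * ∑ x, ν x * (F x - modeMean p m F u) ^ 2 :=
            mul_le_mul_of_nonneg_right (min_le_left _ _) hvar0
        _ ≤ W u * (K ^ 4 * (∑ x, modeLaw p m u x * F x ^ 2 - modeMean p m F u ^ 2)) :=
            mul_le_mul_of_nonneg_left hv (hWpos u).le
        _ = _ := by ring
    have t2 : min (W u) (W (swapConfigAt u j)) * ∑ x, ν x * (F x - F (swapConfigAt x j)) ^ 2 ≤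
        K ^ 4 * ∑ x, (if m ∘ x = u then min (prodWt p x) (prodWt p (swapConfigAt x j)) *
        (F x - F (swapConfigAt x j)) ^ 2 else 0) := by
      rw [mul_sum, mul_sum]
      refine sum_le_sum fun x _ => ?_
      have hA : min (W u) (W (swapConfigAt u j)) * ν x ≤
          K ^ 4 * if m ∘ x = u then min (prodWt p x) (prodWt p (swapConfigAt x j)) else 0 := by
        have a1 : W u * ν x ≤ K ^ 4 * if m ∘ x = u then prodWt p x else 0 := by
          rw [← mode_mass_mul p m H.mode_pos]
          have := mul_le_mul_of_nonneg_left (hdens u x) (hWpos u).le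
          refine this.trans (le_of_eq (by rw [hW]; ring))
        have a2 : W (swapConfigAt u j) * ν x ≤
            K ^ 4 * if m ∘ x = u then prodWt p (swapConfigAt x j) else 0 := by
          rw [hν]; simp only; rw [hlaw]
          refine le_mul_of_one_le_left ?_ (one_le_pow₀ H.one_le_K)
          split_ifs
          · exact (prodWt_pos H.pos _).le
          · exact le_rfl
        split_ifs at a1 a2 ⊢
        · rw [mul_min_of_nonneg _ _ (by positivity)]
          refine le_min ?_ ?_
          · exact (mul_le_mul_of_nonneg_right (min_le_left _ _) (hν0 x)).trans a1
          · exact (mul_le_mul_of_nonneg_right (min_le_right _ _) (hν0 x)).trans a2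
        · exact (mul_le_mul_of_nonneg_right (min_le_left _ _) (hν0 x)).trans a1
      have := mul_le_mul_of_nonneg_right hA (sq_nonneg (F x - F (swapConfigAt x j)))
      split_ifs at this ⊢
      · linarith
      · linarith
    have := mul_le_mul_of_nonneg_left hsq hmin0
    linarith
  have hsum := sum_le_sum fun u (_ : u ∈ univ) => hmain u
  refine hsum.trans (le_of_eq ?_)
  rw [sum_add_distrib, ← mul_sum, ← mul_sum, sum_comm]
  congr 2
  refine sum_congr rfl fun x _ => ?_
  rw [sum_ite_eq univ, if_pos (mem_univ _)]

/-- Cost of switching the mode of coordinate `i` to `true`. -/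
noncomputable def modeFlipEnergy (p : Fin (M + 1) → E → ℝ) (m : E → Bool)
    (F : (Fin (M + 1) → E) → ℝ) (i : Fin (M + 1)) : ℝ :=
  ∑ s, prodWt (modeWt p m) s * (modeMean p m F s - modeMean p m F (Function.update s i true)) ^ 2

lemma TwoModes.flip_weight (H : TwoModes Q p m C K B) (s : Fin (M + 1) → Bool)
    (i : Fin (M + 1)) (hs : s i = false) :
    prodWt (modeWt p m) s ≤ B * prodWt (modeWt p m) (Function.update s i true) := by
  have h := prodWt_update_state (modeWt p m) s i true
  rw [hs] at h
  refine le_of_mul_le_mul_left ?_ (H.mode_pos i false)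
  have := mul_le_mul_of_nonneg_right (H.balance i) (prodWt_pos H.mode_pos s).le
  have e : modeWt p m i false * (B * prodWt (modeWt p m) (Function.update s i true)) =
      B * modeWt p m i true * prodWt (modeWt p m) s := by
    linear_combination B * h
  rw [e]
  exact this

/-- Moving a `false` mode one level down never decreases the weight: this is where the
monotonicity of the mode masses enters. -/
lemma TwoModes.swap_weight (H : TwoModes Q p m C K B) (s : Fin (M + 1) → Bool)
    (j : Fin M) (hs : s j.succ = false) :
    prodWt (modeWt p m) s ≤ prodWt (modeWt p m) (swapConfigAt s j) := by
  have h := prodWt_swap_split (modeWt p m) s j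
  rw [hs] at h
  have hpos := H.mode_pos
  have h1 : ∀ i, modeWt p m i false = 1 - modeWt p m i true := by
    intro i
    have := modeWt_sum p m i
    rw [H.sum_one, Fintype.sum_bool] at this
    linarith
  have hmono := H.mono j
  refine le_of_mul_le_mul_right ?_ (mul_pos (hpos j.castSucc (s j.castSucc)) (hpos j.succ false))
  rw [h]
  refine mul_le_mul_of_nonneg_left ?_ (prodWt_pos hpos s).le
  cases s j.castSucc
  · exact le_rfl
  · rw [h1, h1]
    nlinarith

/-- A mode flip at level `j + 1` is a swap, a mode flip at level `j`, and a swap back. -/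
lemma TwoModes.modeFlip_step (H : TwoModes Q p m C K B) (F : (Fin (M + 1) → E) → ℝ)
    (j : Fin M) :
    modeFlipEnergy p m F j.succ ≤ (1 + 1 / ((j : ℕ) + 1 : ℝ)) * modeFlipEnergy p m F j.castSucc +
      2 * (1 + ((j : ℕ) + 1 : ℝ)) * ((1 + B) * modeSwapEnergy p m F j) := by
  set W := prodWt (modeWt p m) with hW
  set f := modeMean p m F with hf
  have hWpos : ∀ s, 0 < W s := prodWt_pos H.mode_pos
  have hN : (0 : ℝ) < (j : ℕ) + 1 := by positivity
  set N : ℝ := (j : ℕ) + 1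
  set T : (Fin (M + 1) → Bool) → ℝ := fun u =>
    min (W u) (W (swapConfigAt u j)) * (f u - f (swapConfigAt u j)) ^ 2 with hT
  have hT0 : ∀ u, 0 ≤ T u := fun u =>
    mul_nonneg (le_min (hWpos _).le (hWpos _).le) (sq_nonneg _)
  have hne : j.succ ≠ j.castSucc := Fin.castSucc_lt_succ.ne'
  have hper : ∀ s, W s * (f s - f (Function.update s j.succ true)) ^ 2 ≤
      (1 + 1 / N) * (W (swapConfigAt s j) * (f (swapConfigAt s j) -
        f (Function.update (swapConfigAt s j) j.castSucc true)) ^ 2) +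
      2 * (1 + N) * (T s + B * if (swapConfigAt s j) j.castSucc = false then
        T (Function.update (swapConfigAt s j) j.castSucc true) else 0) := by
    intro s
    have hsc : (swapConfigAt s j) j.castSucc = s j.succ := by
      simp [swapConfigAt_eq]
    by_cases hs : s j.succ = false
    · rw [hsc, if_pos hs]
      set u := Function.update (swapConfigAt s j) j.castSucc true with hu
      have hsu : swapConfigAt u j = Function.update s j.succ true := by
        rw [hu]
        simp only [swapConfigAt_eq]
        funext l
        by_cases h1 : l = j.succ
        · subst h1; simp
        · by_cases h2 : l = j.castSucc
          · subst h2; simp [hne, hne.symm]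
          · simp [h1, h2, Equiv.swap_apply_of_ne_of_ne]
      have w1 := H.swap_weight s j hs
      have w2 : W s ≤ B * W (swapConfigAt u j) := by
        rw [hsu]; exact H.flip_weight s j.succ hs
      have w3 : W s ≤ B * W u :=
        w1.trans (H.flip_weight (swapConfigAt s j) j.castSucc (by rw [hsc, hs]))
      have w4 : W s ≤ B * min (W u) (W (swapConfigAt u j)) := by
        rw [mul_min_of_nonneg _ _ H.B_nonneg]; exact le_min w3 w2
      have hTs : T s = W s * (f s - f (swapConfigAt s j)) ^ 2 := by
        simp only [hT]; rw [min_eq_left w1]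
      have h3 := three_sq_le hN (f s - f (swapConfigAt s j)) (f (swapConfigAt s j) - f u)
        (f u - f (swapConfigAt u j))
      have e : f s - f (swapConfigAt s j) + (f (swapConfigAt s j) - f u) +
        (f u - f (swapConfigAt u j)) = f s - f (Function.update s j.succ true) := by
        rw [hsu]; ring
      rw [e] at h3
      have h4 := mul_le_mul_of_nonneg_left h3 (hWpos s).le
      have h5 := mul_le_mul_of_nonneg_right w1 (sq_nonneg (f (swapConfigAt s j) - f u))
      have h6 := mul_le_mul_of_nonneg_right w4 (sq_nonneg (f u - f (swapConfigAt u j)))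
      have h7 : W s * (f u - f (swapConfigAt u j)) ^ 2 ≤ B * T u := by
        refine h6.trans (le_of_eq ?_); simp only [hT]; ring
      have h8 : (0 : ℝ) ≤ 1 + 1 / N := by positivity
      have h9 : (0 : ℝ) ≤ 2 * (1 + N) := by positivity
      rw [hTs]
      have h10 := mul_le_mul_of_nonneg_left h5 h8
      have h11 := mul_le_mul_of_nonneg_left h7 h9
      calc _ ≤ _ := h4
        _ = (1 + 1 / N) * (W s * (f (swapConfigAt s j) - f u) ^ 2) +
            2 * (1 + N) * (W s * (f s - f (swapConfigAt s j)) ^ 2) +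
            2 * (1 + N) * (W s * (f u - f (swapConfigAt u j)) ^ 2) := by ring
        _ ≤ _ := by
          have h12 := add_le_add h10 h11
          linarith
    · have hs' : s j.succ = true := by simpa using hs
      have : Function.update s j.succ true = s := by
        rw [← hs', Function.update_eq_self]
      rw [this, sub_self, hsc, if_neg hs]
      have h1 := hT0 s
      have h2 := (hWpos (swapConfigAt s j)).le
      have : (0 : ℝ) ^ 2 = 0 := by norm_num
      rw [this, mul_zero, mul_zero, add_zero]
      positivity
  have hsum := sum_le_sum fun s (_ : s ∈ univ) => hper s
  refine hsum.trans ?_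
  rw [sum_add_distrib, ← mul_sum, ← mul_sum, sum_add_distrib, ← mul_sum]
  have e1 : ∑ s, W (swapConfigAt s j) * (f (swapConfigAt s j) -
        f (Function.update (swapConfigAt s j) j.castSucc true)) ^ 2 =
      modeFlipEnergy p m F j.castSucc :=
    Fintype.sum_equiv (swapConfigAt_involutive j).toPerm _ _ fun s => rfl
  have e2 : (∑ s, if (swapConfigAt s j) j.castSucc = false then
        T (Function.update (swapConfigAt s j) j.castSucc true) else 0) =
      ∑ s, if s j.castSucc = false then T (Function.update s j.castSucc true) else 0 :=
    Fintype.sum_equiv (swapConfigAt_involutive j).toPerm _ _ fun s => rfl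
  have e3 : ∑ s, T s = modeSwapEnergy p m F j := rfl
  rw [e1, e2, e3]
  have h1 := sum_set_true_le j.castSucc T hT0
  rw [e3] at h1
  have h2 := mul_le_mul_of_nonneg_left h1 H.B_nonneg
  have h3 : (0 : ℝ) ≤ 2 * (1 + N) := by positivity
  have h4 := mul_le_mul_of_nonneg_left (add_le_add_left h2 (modeSwapEnergy p m F j)) h3
  linarith

lemma TwoModes.levelEnergy_zero_le (H : TwoModes Q p m C K B) (F : (Fin (M + 1) → E) → ℝ) :
    ∑ x, prodWt p x * levelForm Q (p 0) (fun a => F (Function.update x 0 a)) ≤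
      levelEnergy Q p F := by
  unfold levelEnergy
  refine single_le_sum (f := fun i => ∑ x, prodWt p x *
    levelForm Q (p i) (fun a => F (Function.update x i a))) (fun i _ => ?_) (mem_univ 0)
  refine sum_nonneg fun x _ => mul_nonneg (prodWt_pos H.pos x).le ?_
  refine sum_nonneg fun a _ => sum_nonneg fun b _ => ?_
  have h1 := H.prop_nonneg a b
  have h2 := (H.pos i a).le
  have h3 := (H.pos i b).le
  positivity

/-- At level `0` modes are flipped by the level chain itself. -/
lemma TwoModes.modeFlip_zero (H : TwoModes Q p m C K B) (F : (Fin (M + 1) → E) → ℝ) :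
    modeFlipEnergy p m F 0 ≤ 2 * (1 + B) * (C * levelEnergy Q p F) := by
  choose c hc using H.hot_poincare
  set W := prodWt (modeWt p m) with hW
  set d : (Fin (M + 1) → E) → ℝ := fun x => c (fun a => F (Function.update x 0 a)) with hd
  have hWpos : ∀ s, 0 < W s := prodWt_pos H.mode_pos
  have hdu : ∀ x a, d (Function.update x 0 a) = d x := by intro x a; simp [hd]
  set T : (Fin (M + 1) → Bool) → ℝ := fun s => W s * ∑ x, modeLaw p m s x * (F x - d x) ^ 2 with hT
  have hT0 : ∀ s, 0 ≤ T s := fun s => mul_nonneg (hWpos s).le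
    (sum_nonneg fun x _ => mul_nonneg (H.modeLaw_nonneg s x) (sq_nonneg _))
  have hdmean : ∀ s, ∑ x, modeLaw p m s x * d x =
      ∑ x, modeLaw p m (Function.update s 0 true) x * d x := by
    intro s
    have h := resample (fun i => condWt p m i (s i)) 0 (condWt_sum p m H.mode_pos 0 (s 0))
      (condWt p m 0 true) d
    simp_rw [hdu, ← sum_mul, condWt_sum p m H.mode_pos 0 true, one_mul] at h
    have e : Function.update (fun i => condWt p m i (s i)) 0 (condWt p m 0 true) =
        fun i => condWt p m i (Function.update s 0 true i) := by
      funext i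
      by_cases hi : i = 0
      · subst hi; simp
      · simp [hi]
    rw [e] at h
    exact h
  have hper : ∀ s, W s * (modeMean p m F s - modeMean p m F (Function.update s 0 true)) ^ 2 ≤
      2 * (T s + B * if s 0 = false then T (Function.update s 0 true) else 0) := by
    intro s
    by_cases hs : s 0 = false
    · rw [if_pos hs]
      have hw := H.flip_weight s 0 hs
      set s' := Function.update s 0 true with hs'
      have e : modeMean p m F s - modeMean p m F s' =
          ∑ x, modeLaw p m s x * (F x - d x) - ∑ x, modeLaw p m s' x * (F x - d x) := by
        simp_rw [mul_sub, sum_sub_distrib]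
        rw [hdmean s]
        unfold modeMean
        ring
      have j1 := jensen_sq _ (H.modeLaw_nonneg s) (H.modeLaw_sum s) (fun x => F x - d x)
      have j2 := jensen_sq _ (H.modeLaw_nonneg s') (H.modeLaw_sum s') (fun x => F x - d x)
      have hq : 0 ≤ ∑ x, modeLaw p m s' x * (F x - d x) ^ 2 :=
        sum_nonneg fun x _ => mul_nonneg (H.modeLaw_nonneg s' x) (sq_nonneg _)
      have h1 : (modeMean p m F s - modeMean p m F s') ^ 2 ≤
          2 * ∑ x, modeLaw p m s x * (F x - d x) ^ 2 +
          2 * ∑ x, modeLaw p m s' x * (F x - d x) ^ 2 := by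
        rw [e]
        nlinarith [sq_nonneg (∑ x, modeLaw p m s x * (F x - d x) +
          ∑ x, modeLaw p m s' x * (F x - d x))]
      have h2 := mul_le_mul_of_nonneg_left h1 (hWpos s).le
      have h3 := mul_le_mul_of_nonneg_right hw hq
      simp only [hT]
      linarith
    · have hs' : s 0 = true := by simpa using hs
      have : Function.update s 0 true = s := by rw [← hs', Function.update_eq_self]
      rw [this, sub_self, if_neg hs]
      have := hT0 s
      simp only [mul_zero, add_zero]
      have h0 : (0 : ℝ) ^ 2 = 0 := by norm_num
      rw [h0, mul_zero]; linarith
  have hsum := sum_le_sum fun s (_ : s ∈ univ) => hper s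
  have hTsum : ∑ s, T s ≤ C * levelEnergy Q p F := by
    simp only [hT]
    rw [hW, mode_mixture p m H.mode_pos (fun _ x => (F x - d x) ^ 2),
      ← resample_self p 0 (H.sum_one 0)]
    refine le_trans ?_ (mul_le_mul_of_nonneg_left (H.levelEnergy_zero_le F) H.C_nonneg)
    rw [mul_sum]
    refine sum_le_sum fun x _ => ?_
    simp_rw [hdu]
    have := mul_le_mul_of_nonneg_left (hc (fun a => F (Function.update x 0 a)))
      (prodWt_pos H.pos x).le
    simp only [hd]
    linarith
  refine hsum.trans ?_
  rw [← mul_sum, sum_add_distrib, ← mul_sum]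
  have h1 := mul_le_mul_of_nonneg_left ((sum_set_true_le 0 T hT0).trans hTsum) H.B_nonneg
  linarith

lemma TwoModes.modeSwapEnergy_nonneg (H : TwoModes Q p m C K B) (F : (Fin (M + 1) → E) → ℝ)
    (j : Fin M) : 0 ≤ modeSwapEnergy p m F j :=
  sum_nonneg fun _ _ => mul_nonneg (le_min (prodWt_pos H.mode_pos _).le
    (prodWt_pos H.mode_pos _).le) (sq_nonneg _)

lemma TwoModes.modeFlip_le (H : TwoModes Q p m C K B) (F : (Fin (M + 1) → E) → ℝ) :
    ∀ (k : ℕ) (hk : k < M + 1), modeFlipEnergy p m F ⟨k, hk⟩ ≤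
      ((k : ℝ) + 1) * (modeFlipEnergy p m F 0 +
        2 * (1 + B) * ∑ j : Fin M, if (j : ℕ) < k then modeSwapEnergy p m F j else 0) := by
  intro k
  induction k with
  | zero => intro hk; simp
  | succ k ih =>
    intro hk
    have hk' : k < M := by omega
    have h1 := ih (by omega)
    have h2 := H.modeFlip_step F ⟨k, hk'⟩
    have e1 : (⟨k, hk'⟩ : Fin M).succ = ⟨k + 1, hk⟩ := rfl
    have e2 : (⟨k, hk'⟩ : Fin M).castSucc = ⟨k, by omega⟩ := rfl
    rw [e1, e2] at h2
    simp only at h2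
    have hs : (∑ j : Fin M, if (j : ℕ) < k + 1 then modeSwapEnergy p m F j else 0) =
        (∑ j : Fin M, if (j : ℕ) < k then modeSwapEnergy p m F j else 0) +
          modeSwapEnergy p m F ⟨k, hk'⟩ := by
      have : ∀ j : Fin M, (if (j : ℕ) < k + 1 then modeSwapEnergy p m F j else 0) =
          (if (j : ℕ) < k then modeSwapEnergy p m F j else 0) +
          if j = ⟨k, hk'⟩ then modeSwapEnergy p m F j else 0 := by
        intro j
        rcases lt_trichotomy (j : ℕ) k with h | h | h
        · have : j ≠ ⟨k, hk'⟩ := by intro hh; rw [hh] at h; simp at h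
          simp [h, this, Nat.lt_succ_of_lt h]
        · have : j = ⟨k, hk'⟩ := Fin.ext h
          subst this; simp
        · have h3 : j ≠ ⟨k, hk'⟩ := by intro hh; rw [hh] at h; simp at h
          simp [h3, not_lt.2 h.le, not_lt.2 (Nat.succ_le_of_lt h)]
      simp_rw [this]
      rw [sum_add_distrib, sum_ite_eq' univ, if_pos (mem_univ _)]
    rw [hs]
    have hk0 : (0 : ℝ) < k + 1 := by positivity
    have h3 := mul_le_mul_of_nonneg_left h1 (show (0 : ℝ) ≤ 1 + 1 / ((k : ℝ) + 1) by positivity)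
    have e3 : (1 + 1 / ((k : ℝ) + 1)) * ((k : ℝ) + 1) = (k : ℝ) + 2 := by field_simp; ring
    rw [← mul_assoc, e3] at h3
    push_cast
    linarith

/-- Poincaré inequality for the swapping chain of a two-mode family. The variance splits into the
part within modes and the variance of the conditional mean given the modes; the latter is
tensorized, and a mode flip at level `i` is carried down to level `0` by swaps. -/
theorem TwoModes.poincare (H : TwoModes Q p m C K B) (F : (Fin (M + 1) → E) → ℝ) :
    ∑ x, prodWt p x * F x ^ 2 - (∑ x, prodWt p x * F x) ^ 2 ≤
      (C + ((M : ℝ) + 1) ^ 2 * (2 * (1 + B) * C + 2 * (1 + B) * (2 * K ^ 4 * (M * C + 1)))) *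
        (levelEnergy Q p F + ∑ j, swapEnergyAt p F j) := by
  have hK0 : 0 ≤ K := le_trans zero_le_one H.one_le_K
  have hB := H.B_nonneg
  have hC := H.C_nonneg
  have hL0 : 0 ≤ levelEnergy Q p F := by
    refine sum_nonneg fun i _ => sum_nonneg fun x _ => mul_nonneg (prodWt_pos H.pos x).le ?_
    refine sum_nonneg fun a _ => sum_nonneg fun b _ => ?_
    have h1 := H.prop_nonneg a b
    have h2 := (H.pos i a).le
    have h3 := (H.pos i b).le
    positivity
  have hS0 : 0 ≤ ∑ j, swapEnergyAt p F j :=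
    sum_nonneg fun j _ => sum_nonneg fun x _ => mul_nonneg (le_min (prodWt_pos H.pos _).le
      (prodWt_pos H.pos _).le) (sq_nonneg _)
  set Lv := levelEnergy Q p F
  set Sv := ∑ j, swapEnergyAt p F j with hSv
  set W := prodWt (modeWt p m) with hW
  have htot : ∑ x, prodWt p x * F x ^ 2 - (∑ x, prodWt p x * F x) ^ 2 =
      withinVar p m F + (∑ s, W s * modeMean p m F s ^ 2 - (∑ s, W s * modeMean p m F s) ^ 2) := by
    have e1 := mode_mixture p m H.mode_pos (fun _ x => F x ^ 2)
    have e2 := mode_mixture p m H.mode_pos (fun _ x => F x)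
    rw [← e1, ← e2]
    unfold withinVar
    simp_rw [mul_sub, sum_sub_distrib]
    unfold modeMean
    ring
  have hES : ∑ s, W s * modeMean p m F s ^ 2 - (∑ s, W s * modeMean p m F s) ^ 2 ≤
      ∑ i, modeFlipEnergy p m F i :=
    efron_stein (M + 1) (modeWt p m) (fun i b => (H.mode_pos i b).le)
      (fun i => by rw [modeWt_sum, H.sum_one]) (modeMean p m F)
      (fun i s => modeMean p m F (Function.update s i true)) (by intro i x a; simp)
  have hV := H.withinVar_le F
  have hSw : ∑ j : Fin M, modeSwapEnergy p m F j ≤ 2 * K ^ 4 * (M * C + 1) * (Lv + Sv) := by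
    calc ∑ j : Fin M, modeSwapEnergy p m F j
        ≤ ∑ j : Fin M, (2 * K ^ 4 * (C * Lv) + 2 * K ^ 4 * swapEnergyAt p F j) := by
          refine sum_le_sum fun j _ => (H.modeSwapEnergy_le F j).trans ?_
          gcongr
      _ = 2 * K ^ 4 * (M * C * Lv + Sv) := by
          rw [sum_add_distrib, sum_const, card_univ, Fintype.card_fin, nsmul_eq_mul, ← mul_sum,
            ← hSv]
          ring
      _ ≤ 2 * K ^ 4 * ((M * C + 1) * (Lv + Sv)) := by
          have : 0 ≤ (M : ℝ) * C * Sv := by positivity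
          gcongr
          linarith
      _ = _ := by ring
  have hF0 := H.modeFlip_zero F
  have hflip : ∀ i, modeFlipEnergy p m F i ≤ ((M : ℝ) + 1) *
      ((2 * (1 + B) * C + 2 * (1 + B) * (2 * K ^ 4 * (M * C + 1))) * (Lv + Sv)) := by
    intro i
    have h1 := H.modeFlip_le F i i.2
    have h2 : (∑ j : Fin M, if (j : ℕ) < (i : ℕ) then modeSwapEnergy p m F j else 0) ≤
        ∑ j : Fin M, modeSwapEnergy p m F j := by
      refine sum_le_sum fun j _ => ?_
      split_ifs
      · exact le_rfl
      · exact H.modeSwapEnergy_nonneg F j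
    refine h1.trans ?_
    have h3 : ((i : ℕ) : ℝ) + 1 ≤ (M : ℝ) + 1 := by
      have : (i : ℕ) ≤ M := Nat.lt_succ_iff.1 i.2
      have : ((i : ℕ) : ℝ) ≤ (M : ℝ) := by exact_mod_cast this
      linarith
    have h4 : modeFlipEnergy p m F 0 + 2 * (1 + B) *
        (∑ j : Fin M, if (j : ℕ) < (i : ℕ) then modeSwapEnergy p m F j else 0) ≤
        (2 * (1 + B) * C + 2 * (1 + B) * (2 * K ^ 4 * (M * C + 1))) * (Lv + Sv) := by
      have h5 := mul_le_mul_of_nonneg_left (h2.trans hSw) (show 0 ≤ 2 * (1 + B) by positivity)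
      have h6 : 0 ≤ 2 * (1 + B) * C * Sv := by positivity
      have h7 : 2 * (1 + B) * (C * levelEnergy Q p F) = 2 * (1 + B) * C * Lv := by
        rw [mul_assoc, mul_assoc, mul_assoc]
      linarith
    refine (mul_le_mul_of_nonneg_left h4 (by positivity)).trans ?_
    refine mul_le_mul_of_nonneg_right h3 ?_
    positivity
  have hsum : ∑ i, modeFlipEnergy p m F i ≤ ((M : ℝ) + 1) * (((M : ℝ) + 1) *
      ((2 * (1 + B) * C + 2 * (1 + B) * (2 * K ^ 4 * (M * C + 1))) * (Lv + Sv))) := by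
    refine (sum_le_sum fun i _ => hflip i).trans (le_of_eq ?_)
    rw [sum_const, card_univ, Fintype.card_fin, nsmul_eq_mul]
    push_cast
    ring
  rw [htot]
  have : 0 ≤ C * Sv := by positivity
  have hV' : withinVar p m F ≤ C * (Lv + Sv) := by linarith
  linarith

end TwoModes

/-! ### Single-site dynamics on the hypercube -/

/-- Configuration `x` with the spin at `v` reversed. -/
def flipAt {n : ℕ} (v : Fin n) (x : Fin n → Bool) : Fin n → Bool :=
  Function.update x v (!x v)

lemma flipAt_flipAt {n : ℕ} (v : Fin n) (x : Fin n → Bool) : flipAt v (flipAt v x) = x := by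
  simp [flipAt]

lemma sum_flipAt {n : ℕ} (F : Fin n → (Fin n → Bool) → ℝ) :
    ∑ x, ∑ v, F v (flipAt v x) = ∑ x, ∑ v, F v x := by
  rw [sum_comm, sum_comm (f := fun x v => F v x)]
  refine sum_congr rfl fun v _ => ?_
  exact Equiv.sum_comp (Function.Involutive.toPerm (flipAt v) (flipAt_flipAt v)) (F v)

lemma plusCount_flipAt {n : ℕ} (v : Fin n) (x : Fin n → Bool) (hv : x v = false) :
    plusCount n (flipAt v x) = plusCount n x + 1 := by
  unfold plusCount flipAt
  have : univ.filter (fun i => Function.update x v (!x v) i = true) =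
      insert v (univ.filter (fun i => x i = true)) := by
    ext i
    by_cases h : i = v
    · subst h; simp [hv]
    · simp [h]
  rw [this, card_insert_of_notMem (by simp [hv])]

lemma plusCount_le {n : ℕ} (x : Fin n → Bool) : plusCount n x ≤ n := by
  unfold plusCount
  exact (card_le_univ _).trans (by simp)

lemma card_false {n : ℕ} (x : Fin n → Bool) :
    ((univ.filter (fun v => x v = false)).card : ℝ) = n - plusCount n x := by
  have h := card_filter_add_card_filter_not (s := (univ : Finset (Fin n))) (fun v => x v = true)
  simp only [Bool.not_eq_true, card_univ, Fintype.card_fin] at h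
  unfold plusCount
  have h' := congrArg (Nat.cast : ℕ → ℝ) h
  push_cast at h'
  linarith

lemma plusCount_eq_n {n : ℕ} (x : Fin n → Bool) (hx : plusCount n x = n) :
    x = fun _ => true := by
  unfold plusCount at hx
  have : univ.filter (fun i => x i = true) = univ := by
    apply eq_univ_of_card
    simpa using hx
  funext i
  have := (Finset.ext_iff.1 this i).2 (mem_univ _)
  simpa using this

lemma card_level (n k : ℕ) :
    (univ.filter (fun x : Fin n → Bool => plusCount n x = k)).card = n.choose k := by
  have : n.choose k = (powersetCard k (univ : Finset (Fin n))).card := by simp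
  rw [this]
  refine card_bij' (fun x _ => univ.filter (fun i => x i = true)) (fun s _ i => decide (i ∈ s))
    ?_ ?_ ?_ ?_
  · intro x hx
    have := (mem_filter.1 hx).2
    simpa [mem_powersetCard, plusCount] using this
  · intro s hs
    refine mem_filter.2 ⟨mem_univ _, ?_⟩
    simpa [mem_powersetCard, plusCount] using hs
  · intro x _
    funext i
    simp
  · intro s _
    ext i
    simp

lemma isingProp_sum {n : ℕ} (x : Fin n → Bool) (f : (Fin n → Bool) → ℝ) :
    ∑ y, isingProp n x y * f y =
      (∑ v, (f (Function.update x v true) + f (Function.update x v false))) / (n * 2) := by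
  unfold isingProp
  have e : ∀ y, ((univ.filter (fun vs : Fin n × Bool => Function.update x vs.1 vs.2 = y)).card : ℝ)
      / (n * 2) * f y = (∑ vs : Fin n × Bool,
        if Function.update x vs.1 vs.2 = y then f y else 0) / (n * 2) := by
    intro y
    rw [← sum_filter, sum_const, nsmul_eq_mul]
    ring
  simp_rw [e]
  rw [← sum_div, sum_comm, Fintype.sum_prod_type]
  simp

lemma isingProp_nonneg {n : ℕ} (x y : Fin n → Bool) : 0 ≤ isingProp n x y := by
  unfold isingProp; positivity

lemma isingProp_symm {n : ℕ} (x y : Fin n → Bool) : isingProp n x y = isingProp n y x := by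
  unfold isingProp
  congr 2
  have key : ∀ x y : Fin n → Bool, (univ.filter
      (fun vs : Fin n × Bool => Function.update x vs.1 vs.2 = y)).card ≤
      (univ.filter (fun vs : Fin n × Bool => Function.update y vs.1 vs.2 = x)).card := by
    intro x y
    refine card_le_card_of_injOn (fun vs => (vs.1, x vs.1)) ?_ ?_
    · rintro ⟨v, s⟩ hvs
      simp only [coe_filter, mem_univ, true_and, Set.mem_ofPred_eq] at hvs ⊢
      rw [← hvs]
      simp
    · rintro ⟨v, s⟩ hvs ⟨w, t⟩ hwt hh
      simp only [coe_filter, mem_univ, true_and, Set.mem_ofPred_eq] at hvs hwt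
      simp only [Prod.mk.injEq] at hh
      obtain ⟨rfl, -⟩ := hh
      have := congrFun (hvs.trans hwt.symm) v
      simpa using this
  exact le_antisymm (key x y) (key y x)

lemma isingProp_offdiag {n : ℕ} (a : Fin n → Bool) :
    ∑ b, (if b ≠ a then isingProp n a b else 0) ≤ 1 / 2 := by
  have e : ∑ b, (if b ≠ a then isingProp n a b else 0) =
      ∑ b, isingProp n a b * (if b ≠ a then (1 : ℝ) else 0) := by
    refine sum_congr rfl fun b _ => ?_
    split_ifs <;> simp
  rw [e, isingProp_sum]
  have h : ∑ v, ((if Function.update a v true ≠ a then (1 : ℝ) else 0) +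
      (if Function.update a v false ≠ a then (1 : ℝ) else 0)) ≤ ∑ v : Fin n, 1 := by
    refine sum_le_sum fun v _ => ?_
    cases hv : a v
    · have : Function.update a v false = a := by rw [← hv]; simp
      simp only [this, ne_eq, not_true_eq_false, if_false, add_zero]
      split_ifs <;> norm_num
    · have : Function.update a v true = a := by rw [← hv]; simp
      simp only [this, ne_eq, not_true_eq_false, if_false, zero_add]
      split_ifs <;> norm_num
  simp only [sum_const, card_univ, Fintype.card_fin, nsmul_eq_mul, mul_one] at h
  rcases Nat.eq_zero_or_pos n with rfl | hn
  · simp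
  · have : (0 : ℝ) < n := by exact_mod_cast hn
    rw [div_le_div_iff₀ (by positivity) (by norm_num)]
    linarith

lemma levelForm_ising {n : ℕ} (ρ g : (Fin n → Bool) → ℝ) :
    levelForm (isingProp n) ρ g =
      (∑ x, ∑ v, min (ρ x) (ρ (flipAt v x)) * (g x - g (flipAt v x)) ^ 2) / (n * 2) := by
  unfold levelForm
  rw [sum_div]
  refine sum_congr rfl fun x _ => ?_
  simp_rw [mul_assoc]
  rw [isingProp_sum x (fun b => min (ρ x) (ρ b) * (g x - g b) ^ 2)]
  congr 1
  refine sum_congr rfl fun v _ => ?_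
  unfold flipAt
  cases hv : x v
  · have : Function.update x v false = x := by rw [← hv]; simp
    simp [this]
  · have : Function.update x v true = x := by rw [← hv]; simp
    simp [this]

/-- Total squared increment of `g` over the hypercube edges joining the layers `r` and `r + 1`. -/
noncomputable def layerEdges {n : ℕ} (g : (Fin n → Bool) → ℝ) (r : ℕ) : ℝ :=
  ∑ x, ∑ v, if plusCount n x = r ∧ x v = false then (g x - g (flipAt v x)) ^ 2 else 0

/-- Total squared deviation of `g` on the layer `k` from its value at the all-plus state. -/
noncomputable def layerDev {n : ℕ} (g : (Fin n → Bool) → ℝ) (k : ℕ) : ℝ :=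
  ∑ x, if plusCount n x = k then (g x - g (fun _ => true)) ^ 2 else 0

lemma layerEdges_nonneg {n : ℕ} (g : (Fin n → Bool) → ℝ) (r : ℕ) : 0 ≤ layerEdges g r := by
  refine sum_nonneg fun x _ => sum_nonneg fun v _ => ?_
  split_ifs
  · positivity
  · exact le_rfl

/-- Summing over upward edges turns sums on layer `k` into sums on layer `k + 1`. -/
lemma sum_up_edges {n : ℕ} (f : (Fin n → Bool) → ℝ) (k : ℕ) :
    ∑ x, ∑ v, (if plusCount n x = k ∧ x v = false then f (flipAt v x) else 0) =
      ((k : ℝ) + 1) * ∑ x, if plusCount n x = k + 1 then f x else 0 := by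
  have e : ∀ (x : Fin n → Bool) (v : Fin n),
      (if plusCount n x = k ∧ x v = false then f (flipAt v x) else 0) =
      (fun (v : Fin n) (y : Fin n → Bool) =>
        if plusCount n y = k + 1 ∧ y v = true then f y else 0) v (flipAt v x) := by
    intro x v
    cases hv : x v
    · have := plusCount_flipAt v x hv
      have h2 : flipAt v x v = true := by simp [flipAt, hv]
      simp [this, h2]
    · have h2 : flipAt v x v = false := by simp [flipAt, hv]
      simp [h2]
  simp_rw [e]
  rw [sum_flipAt (fun (v : Fin n) (y : Fin n → Bool) =>
        if plusCount n y = k + 1 ∧ y v = true then f y else 0), mul_sum]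
  refine sum_congr rfl fun x _ => ?_
  by_cases hk : plusCount n x = k + 1
  · simp only [hk, true_and, if_true]
    rw [← sum_filter, sum_const, nsmul_eq_mul]
    have : (univ.filter (fun v => x v = true)).card = k + 1 := hk
    rw [this]
    push_cast
    ring
  · simp [hk]

lemma layerDev_step {n : ℕ} (g : (Fin n → Bool) → ℝ) (k m : ℕ) :
    ((m : ℝ) + 1) * (((n : ℝ) - k) * layerDev g k) ≤
      ((m : ℝ) + 2) * (((k : ℝ) + 1) * layerDev g (k + 1)) +
        ((m : ℝ) + 1) * ((m : ℝ) + 2) * layerEdges g k := by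
  have e1 : ((n : ℝ) - k) * layerDev g k = ∑ x, ∑ v,
      (if plusCount n x = k ∧ x v = false then (g x - g (fun _ => true)) ^ 2 else 0) := by
    unfold layerDev
    rw [mul_sum]
    refine sum_congr rfl fun x _ => ?_
    by_cases hx : plusCount n x = k
    · simp only [hx, true_and, if_true]
      rw [← sum_filter, sum_const, nsmul_eq_mul, card_false, hx]
    · simp [hx]
  rw [e1]
  unfold layerDev layerEdges
  rw [← sum_up_edges (fun x => (g x - g (fun _ => true)) ^ 2), mul_sum, mul_sum, mul_sum,
    ← sum_add_distrib]
  refine sum_le_sum fun x _ => ?_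
  rw [mul_sum, mul_sum, mul_sum, ← sum_add_distrib]
  refine sum_le_sum fun v _ => ?_
  split_ifs
  · nlinarith [sq_nonneg ((g (flipAt v x) - g (fun _ => true)) -
      ((m : ℝ) + 1) * (g x - g (flipAt v x)))]
  · simp

lemma choose_layer (n k : ℕ) (hk : k < n) :
    (n.choose k : ℝ) * ((n : ℝ) - k) = (n.choose (k + 1) : ℝ) * ((k : ℝ) + 1) := by
  have h := Nat.choose_succ_right_eq n k
  have h2 : ((n - k : ℕ) : ℝ) = (n : ℝ) - k := by
    rw [Nat.cast_sub hk.le]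
  rw [← h2]
  exact_mod_cast h.symm

/-- The mean squared deviation on layer `n - m` is controlled by the mean squared increments
along the layers above it. -/
lemma layerDev_le {n : ℕ} (g : (Fin n → Bool) → ℝ) (m : ℕ) : ∀ k, k + m = n →
    layerDev g k / n.choose k ≤ ((m : ℝ) + 1) *
      ∑ r ∈ Ico k n, layerEdges g r / (n.choose r * ((n : ℝ) - r)) := by
  induction m with
  | zero =>
    intro k hk
    have : layerDev g k = 0 := by
      unfold layerDev
      refine sum_eq_zero fun x _ => ?_
      split_ifs with h
      · rw [plusCount_eq_n x (by omega)]; simp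
      · rfl
    rw [this]
    simp [show k = n by omega]
  | succ m ih =>
    intro k hk
    have h1 := ih (k + 1) (by omega)
    have h2 := layerDev_step g k m
    rw [← add_sum_Ioo_eq_sum_Ico (by omega : k < n)]
    have e : Ioo k n = Ico (k + 1) n := by ext; simp
    rw [e]
    set S := ∑ r ∈ Ico (k + 1) n, layerEdges g r / (n.choose r * ((n : ℝ) - r))
    have hc := choose_layer n k (by omega)
    have hCk : (0 : ℝ) < n.choose k := by exact_mod_cast Nat.choose_pos (by omega)
    have hCk1 : (0 : ℝ) < n.choose (k + 1) := by exact_mod_cast Nat.choose_pos (by omega)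
    have hnk : (0 : ℝ) < (n : ℝ) - k := by
      have : (k : ℝ) < n := by exact_mod_cast (by omega : k < n)
      linarith
    have hm : (0 : ℝ) < (m : ℝ) + 1 := by positivity
    have hD : (0 : ℝ) < n.choose k * ((n : ℝ) - k) := by positivity
    have e1 : layerDev g k / n.choose k =
        (((n : ℝ) - k) * layerDev g k) / (n.choose k * ((n : ℝ) - k)) := by
      field_simp
    have e2 : layerDev g (k + 1) / n.choose (k + 1) =
        (((k : ℝ) + 1) * layerDev g (k + 1)) / (n.choose k * ((n : ℝ) - k)) := by
      rw [hc]
      have : (0 : ℝ) < (k : ℝ) + 1 := by positivity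
      field_simp
    rw [e2, div_le_iff₀ hD] at h1
    rw [e1, div_le_iff₀ hD]
    have e3 : layerEdges g k / (n.choose k * ((n : ℝ) - k)) * (n.choose k * ((n : ℝ) - k)) =
        layerEdges g k := div_mul_cancel₀ _ hD.ne'
    push_cast
    have h3 : ((m : ℝ) + 1) * (((n : ℝ) - k) * layerDev g k) ≤ ((m : ℝ) + 1) *
        (((m : ℝ) + 2) * (S * (n.choose k * ((n : ℝ) - k)) + layerEdges g k)) := by
      nlinarith
    have h4 := le_of_mul_le_mul_left h3 hm
    calc _ ≤ _ := h4
      _ = _ := by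
        linear_combination (-(m : ℝ) - 2) * e3

/-- Poincaré-type bound on the layer `k` for a density that is constant on layers, with layer
masses `φ`, when no layer above `k` has mass less than `φ k / K`. -/
lemma layer_up {n : ℕ} (φ : ℕ → ℝ) (ρ g : (Fin n → Bool) → ℝ) (K : ℝ) (k : ℕ)
    (hKp : 0 ≤ K) (hφ : ∀ r, 0 ≤ φ r) (hρ : ∀ x, ρ x = φ (plusCount n x) / n.choose (plusCount n x))
    (hk : k ≤ n) (hK : ∀ r, k ≤ r → r ≤ n → φ k ≤ K * φ r) :
    ∑ x, (if plusCount n x = k then ρ x * (g x - g (fun _ => true)) ^ 2 else 0) ≤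
      2 * n * (n + 1) * K * levelForm (isingProp n) ρ g := by
  have e0 : ∑ x, (if plusCount n x = k then ρ x * (g x - g (fun _ => true)) ^ 2 else 0) =
      φ k * (layerDev g k / n.choose k) := by
    unfold layerDev
    rw [sum_div, mul_sum]
    refine sum_congr rfl fun x _ => ?_
    split_ifs with h
    · rw [hρ, h]; ring
    · simp
  rw [e0]
  rcases Nat.eq_zero_or_pos n with rfl | hn
  · have := layerDev_le g 0 k (by omega)
    simp only [show k = 0 by omega, Ico_self, sum_empty, mul_zero] at this ⊢
    have := mul_le_mul_of_nonneg_left this (hφ 0)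
    simpa using this
  have hnR : (0 : ℝ) < n := by exact_mod_cast hn
  have hρ0 : ∀ x, 0 ≤ ρ x := fun x => by
    rw [hρ]; exact div_nonneg (hφ _) (by positivity)
  -- contribution of the edges between the layers `r` and `r + 1` to the energy
  set w : ℕ → ℝ := fun r => ∑ x, ∑ v, if plusCount n x = r ∧ x v = false then
    min (ρ x) (ρ (flipAt v x)) * (g x - g (flipAt v x)) ^ 2 else 0 with hw
  have hedge : ∀ r ∈ Ico k n, φ k * (layerEdges g r / (n.choose r * ((n : ℝ) - r))) ≤ K * w r := by
    intro r hr
    rw [mem_Ico] at hr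
    have hCr : (0 : ℝ) < n.choose r := by exact_mod_cast Nat.choose_pos (by omega)
    have hCr1 : (0 : ℝ) < n.choose (r + 1) := by exact_mod_cast Nat.choose_pos (by omega)
    have hnr : (1 : ℝ) ≤ (n : ℝ) - r := by
      have : ((r + 1 : ℕ) : ℝ) ≤ n := by exact_mod_cast (by omega : r + 1 ≤ n)
      push_cast at this
      linarith
    rw [hw, layerEdges, sum_div, mul_sum, mul_sum]
    refine sum_le_sum fun x _ => ?_
    rw [sum_div, mul_sum, mul_sum]
    refine sum_le_sum fun v _ => ?_
    split_ifs with h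
    · obtain ⟨h1, h2⟩ := h
      have h3 := plusCount_flipAt v x h2
      have key : φ k / (n.choose r * ((n : ℝ) - r)) ≤ K * min (ρ x) (ρ (flipAt v x)) := by
        rcases min_choice (ρ x) (ρ (flipAt v x)) with hmn | hmn
        · rw [hmn, hρ x, h1]
          calc φ k / (n.choose r * ((n : ℝ) - r)) ≤ φ k / n.choose r :=
                div_le_div_of_nonneg_left (hφ k) hCr (le_mul_of_one_le_right hCr.le hnr)
            _ ≤ K * φ r / n.choose r := by
                gcongr; exact hK r hr.1 hr.2.le
            _ = _ := by ring
        · rw [hmn, hρ (flipAt v x), h3, h1, choose_layer n r hr.2]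
          calc φ k / (n.choose (r + 1) * ((r : ℝ) + 1)) ≤ φ k / n.choose (r + 1) :=
                div_le_div_of_nonneg_left (hφ k) hCr1
                  (le_mul_of_one_le_right hCr1.le (by linarith [(Nat.cast_nonneg r : (0 : ℝ) ≤ r)]))
            _ ≤ K * φ (r + 1) / n.choose (r + 1) := by
                gcongr; exact hK (r + 1) (by omega) hr.2
            _ = _ := by ring
      have := mul_le_mul_of_nonneg_right key (sq_nonneg (g x - g (flipAt v x)))
      calc _ = φ k / (n.choose r * ((n : ℝ) - r)) * (g x - g (flipAt v x)) ^ 2 := by ring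
        _ ≤ _ := this
        _ = _ := by ring
    · simp
  have hwsum : ∑ r ∈ Ico k n, w r ≤ n * 2 * levelForm (isingProp n) ρ g := by
    rw [levelForm_ising, mul_div_cancel₀ _ (by positivity), hw, sum_comm]
    refine sum_le_sum fun x _ => ?_
    rw [sum_comm]
    refine sum_le_sum fun v _ => ?_
    have h0 : 0 ≤ min (ρ x) (ρ (flipAt v x)) * (g x - g (flipAt v x)) ^ 2 :=
      mul_nonneg (le_min (hρ0 _) (hρ0 _)) (sq_nonneg _)
    by_cases hv : x v = false
    · simp only [hv, and_true]
      rw [sum_ite_eq]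
      split_ifs
      · exact le_rfl
      · exact h0
    · simp [hv, h0]
  have hd := layerDev_le g (n - k) k (by omega)
  have hnk : ((n - k : ℕ) : ℝ) + 1 ≤ (n : ℝ) + 1 := by
    have : ((n - k : ℕ) : ℝ) ≤ n := by exact_mod_cast Nat.sub_le n k
    linarith
  have hsum : φ k * ∑ r ∈ Ico k n, layerEdges g r / (n.choose r * ((n : ℝ) - r)) ≤
      K * ∑ r ∈ Ico k n, w r := by
    rw [mul_sum, mul_sum]; exact sum_le_sum hedge
  have hKw : 0 ≤ φ k * ∑ r ∈ Ico k n, layerEdges g r / (n.choose r * ((n : ℝ) - r)) := by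
    refine mul_nonneg (hφ k) (sum_nonneg fun r hr => div_nonneg (layerEdges_nonneg g r) ?_)
    rw [mem_Ico] at hr
    have : (r : ℝ) ≤ n := by exact_mod_cast hr.2.le
    exact mul_nonneg (by positivity) (by linarith)
  calc φ k * (layerDev g k / n.choose k)
      ≤ φ k * ((((n - k : ℕ) : ℝ) + 1) *
        ∑ r ∈ Ico k n, layerEdges g r / (n.choose r * ((n : ℝ) - r))) :=
        mul_le_mul_of_nonneg_left hd (hφ k)
    _ = (((n - k : ℕ) : ℝ) + 1) *
        (φ k * ∑ r ∈ Ico k n, layerEdges g r / (n.choose r * ((n : ℝ) - r))) := by ring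
    _ ≤ ((n : ℝ) + 1) * (K * (n * 2 * levelForm (isingProp n) ρ g)) :=
        mul_le_mul hnk (hsum.trans (mul_le_mul_of_nonneg_left hwsum hKp)) hKw (by positivity)
    _ = _ := by ring

/-! ### Spin reversal -/

/-- The configuration with all spins reversed. -/
def revSpins {n : ℕ} (x : Fin n → Bool) : Fin n → Bool := fun v => !x v

lemma revSpins_revSpins {n : ℕ} (x : Fin n → Bool) : revSpins (revSpins x) = x := by
  funext v; simp [revSpins]

lemma sum_revSpins {n : ℕ} (f : (Fin n → Bool) → ℝ) : ∑ x, f (revSpins x) = ∑ x, f x :=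
  Equiv.sum_comp (Function.Involutive.toPerm revSpins revSpins_revSpins) f

lemma plusCount_revSpins {n : ℕ} (x : Fin n → Bool) :
    plusCount n (revSpins x) = n - plusCount n x := by
  have h := card_filter_add_card_filter_not (s := (univ : Finset (Fin n))) (fun v => x v = true)
  simp only [Bool.not_eq_true, card_univ, Fintype.card_fin] at h
  have e : plusCount n (revSpins x) = (univ.filter (fun v => x v = false)).card := by
    unfold plusCount revSpins; simp
  rw [e]
  unfold plusCount
  omega

lemma flipAt_revSpins {n : ℕ} (v : Fin n) (x : Fin n → Bool) :
    flipAt v (revSpins x) = revSpins (flipAt v x) := by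
  funext w
  by_cases h : w = v
  · subst h; simp [flipAt, revSpins]
  · simp [flipAt, revSpins, h]

lemma levelForm_revSpins {n : ℕ} (ρ g : (Fin n → Bool) → ℝ) :
    levelForm (isingProp n) (fun x => ρ (revSpins x)) (fun x => g (revSpins x)) =
      levelForm (isingProp n) ρ g := by
  rw [levelForm_ising, levelForm_ising]
  congr 1
  simp_rw [← flipAt_revSpins]
  exact sum_revSpins (fun x => ∑ v, min (ρ x) (ρ (flipAt v x)) * (g x - g (flipAt v x)) ^ 2)

lemma layer_down {n : ℕ} (φ : ℕ → ℝ) (ρ g : (Fin n → Bool) → ℝ) (K : ℝ) (k : ℕ)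
    (hKp : 0 ≤ K) (hφ : ∀ r, 0 ≤ φ r)
    (hρ : ∀ x, ρ x = φ (plusCount n x) / n.choose (plusCount n x))
    (hk : k ≤ n) (hK : ∀ r, r ≤ k → φ k ≤ K * φ r) :
    ∑ x, (if plusCount n x = k then ρ x * (g x - g (fun _ => false)) ^ 2 else 0) ≤
      2 * n * (n + 1) * K * levelForm (isingProp n) ρ g := by
  have h := layer_up (fun r => φ (n - r)) (fun x => ρ (revSpins x)) (fun x => g (revSpins x)) K
    (n - k) hKp (fun r => hφ _) (fun x => by
      rw [hρ, plusCount_revSpins, Nat.choose_symm (plusCount_le x)]) (by omega)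
    (fun r h1 h2 => by
      have : n - (n - k) = k := by omega
      rw [this]
      exact hK _ (by omega))
  rw [levelForm_revSpins] at h
  refine le_trans (le_of_eq ?_) h
  rw [← sum_revSpins]
  refine sum_congr rfl fun x _ => ?_
  have e : (revSpins fun _ : Fin n => true) = fun _ => false := by funext; simp [revSpins]
  rw [e, plusCount_revSpins]
  have : n - plusCount n x = k ↔ plusCount n x = n - k := by
    have := plusCount_le x
    omega
  simp only [this]

lemma sum_layers {n : ℕ} (f : (Fin n → Bool) → ℝ) :
    ∑ x, f x = ∑ k ∈ range (n + 1), ∑ x, if plusCount n x = k then f x else 0 := by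
  rw [sum_comm]
  refine sum_congr rfl fun x _ => ?_
  rw [sum_ite_eq, if_pos (mem_range.2 (Nat.lt_succ_iff.2 (plusCount_le x)))]

lemma sum_profile {n : ℕ} (φ : ℕ → ℝ) :
    ∑ x : Fin n → Bool, φ (plusCount n x) / n.choose (plusCount n x) =
      ∑ k ∈ range (n + 1), φ k := by
  rw [sum_layers]
  refine sum_congr rfl fun k hk => ?_
  have e : ∀ x : Fin n → Bool, (if plusCount n x = k then
      φ (plusCount n x) / (n.choose (plusCount n x) : ℝ) else 0) =
      if plusCount n x = k then φ k / n.choose k else 0 := by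
    intro x
    split_ifs with h
    · rw [h]
    · rfl
  simp_rw [e]
  rw [← sum_filter, sum_const, card_level, nsmul_eq_mul]
  have : (n.choose k : ℝ) ≠ 0 := by
    exact_mod_cast (Nat.choose_pos (Nat.lt_succ_iff.1 (mem_range.1 hk))).ne'
  field_simp

/-! ### The energy profile of the mean-field model -/

/-- Logarithm of the total Gibbs weight (at inverse temperature `β`) of the configurations with
`k` plus spins. -/
noncomputable def logWt (n : ℕ) (β h : ℝ) (k : ℕ) : ℝ :=
  β * (((k : ℝ) ^ 2 + ((n : ℝ) - k) ^ 2 - n) / 2 + h * k) + Real.log (n.choose k)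

lemma isingH_eq (n : ℕ) (h : ℝ) (x : Fin n → Bool) :
    isingH n h x = ((plusCount n x : ℝ) ^ 2 + ((n : ℝ) - plusCount n x) ^ 2 - n) / 2 +
      h * plusCount n x := by
  unfold isingH
  congr 1
  set lt := univ.filter (fun p : Fin n × Fin n => p.1 < p.2 ∧ x p.1 = x p.2)
  have h1 : (univ.filter (fun p : Fin n × Fin n => x p.1 = x p.2)).card =
      lt.card + lt.card + n := by
    have hgt : (univ.filter (fun p : Fin n × Fin n => p.2 < p.1 ∧ x p.1 = x p.2)).card =
        lt.card := by
      refine card_bij' (fun p _ => p.swap) (fun p _ => p.swap) ?_ ?_ ?_ ?_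
      · intro p hp
        have := (mem_filter.1 hp).2
        exact mem_filter.2 ⟨mem_univ _, this.1, this.2.symm⟩
      · intro p hp
        have := (mem_filter.1 hp).2
        exact mem_filter.2 ⟨mem_univ _, this.1, this.2.symm⟩
      · intro p _; rfl
      · intro p _; rfl
    have hd : (univ.filter (fun p : Fin n × Fin n => p.1 = p.2)).card = n := by
      have := card_image_of_injective (univ : Finset (Fin n))
        (f := fun i => (i, i)) (fun a b hab => by simpa using hab)
      rw [card_univ, Fintype.card_fin] at this
      have hi : univ.filter (fun p : Fin n × Fin n => p.1 = p.2) =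
          univ.image (fun i : Fin n => (i, i)) := by
        ext ⟨a, b⟩
        simp
      rw [hi, this]
    have hu : univ.filter (fun p : Fin n × Fin n => x p.1 = x p.2) =
        (lt ∪ univ.filter (fun p : Fin n × Fin n => p.2 < p.1 ∧ x p.1 = x p.2)) ∪
          univ.filter (fun p : Fin n × Fin n => p.1 = p.2) := by
      ext ⟨a, b⟩
      simp only [lt, mem_union, mem_filter, mem_univ, true_and]
      constructor
      · intro hab
        rcases lt_trichotomy a b with h | h | h
        · exact Or.inl (Or.inl ⟨h, hab⟩)
        · exact Or.inr h
        · exact Or.inl (Or.inr ⟨h, hab⟩)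
      · rintro ((h | h) | h)
        · exact h.2
        · exact h.2
        · rw [h]
    rw [hu, card_union_of_disjoint, card_union_of_disjoint, hgt, hd]
    · rw [disjoint_left]
      intro p hp hp'
      exact lt_asymm (mem_filter.1 hp).2.1 (mem_filter.1 hp').2.1
    · rw [disjoint_left]
      intro p hp hp'
      have e := (mem_filter.1 hp').2
      rcases mem_union.1 hp with hp | hp
      · exact (mem_filter.1 hp).2.1.ne e
      · exact (mem_filter.1 hp).2.1.ne e.symm
  have h2 : (((univ.filter (fun p : Fin n × Fin n => x p.1 = x p.2)).card : ℕ) : ℝ) =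
      (plusCount n x : ℝ) ^ 2 + ((n : ℝ) - plusCount n x) ^ 2 := by
    rw [← card_false]
    have hu : univ.filter (fun p : Fin n × Fin n => x p.1 = x p.2) =
        (univ.filter (fun v => x v = true)) ×ˢ (univ.filter (fun v => x v = true)) ∪
        (univ.filter (fun v => x v = false)) ×ˢ (univ.filter (fun v => x v = false)) := by
      ext ⟨a, b⟩
      simp only [mem_union, mem_filter, mem_univ, true_and, mem_product]
      cases x a <;> cases x b <;> simp
    rw [hu, card_union_of_disjoint, card_product, card_product]
    · unfold plusCount
      push_cast
      ring
    · rw [disjoint_left]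
      rintro ⟨a, b⟩ hp hp'
      simp only [mem_filter, mem_univ, true_and, mem_product] at hp hp'
      rw [hp.1] at hp'
      exact absurd hp'.1 (by simp)
  rw [h1] at h2
  push_cast at h2
  linarith

lemma isingRhoUn_eq (n M : ℕ) (hM : 0 < M) (β h : ℝ) (i : Fin (M + 1)) (x : Fin n → Bool) :
    isingRhoUn n M β h i x =
      Real.exp (((i : ℕ) : ℝ) / M * logWt n β h (plusCount n x)) / n.choose (plusCount n x) := by
  have hC : (0 : ℝ) < n.choose (plusCount n x) := by
    exact_mod_cast Nat.choose_pos (plusCount_le x)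
  have hM' : (M : ℝ) ≠ 0 := by exact_mod_cast hM.ne'
  unfold isingRhoUn logWt
  rw [isingH_eq, Real.rpow_def_of_pos hC, ← Real.exp_add, eq_div_iff hC.ne']
  nth_rw 2 [← Real.exp_log hC]
  rw [← Real.exp_add]
  congr 1
  field_simp
  ring

/-- Normalizing constant of the law `∝ e^(θ ψ(k))` of the number of plus spins; level `i` has
`θ = i / M`. -/
noncomputable def partZ (n : ℕ) (β h θ : ℝ) : ℝ :=
  ∑ k ∈ range (n + 1), Real.exp (θ * logWt n β h k)

lemma partZ_pos (n : ℕ) (β h θ : ℝ) : 0 < partZ n β h θ :=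
  sum_pos (fun _ _ => Real.exp_pos _) ⟨0, by simp⟩

lemma isingRho_eq (n M : ℕ) (hM : 0 < M) (β h : ℝ) (i : Fin (M + 1)) (x : Fin n → Bool) :
    isingRho n M β h i x =
      (Real.exp (((i : ℕ) : ℝ) / M * logWt n β h (plusCount n x)) /
        partZ n β h (((i : ℕ) : ℝ) / M)) / n.choose (plusCount n x) := by
  unfold isingRho
  simp_rw [isingRhoUn_eq n M hM]
  rw [sum_profile (fun k => Real.exp (((i : ℕ) : ℝ) / M * logWt n β h k))]
  unfold partZ
  ring

lemma isingRho_pos (n M : ℕ) (hM : 0 < M) (β h : ℝ) (i : Fin (M + 1)) (x : Fin n → Bool) :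
    0 < isingRho n M β h i x := by
  rw [isingRho_eq n M hM]
  have := partZ_pos n β h (((i : ℕ) : ℝ) / M)
  have hC : (0 : ℝ) < n.choose (plusCount n x) := by
    exact_mod_cast Nat.choose_pos (plusCount_le x)
  positivity

lemma isingRho_sum (n M : ℕ) (hM : 0 < M) (β h : ℝ) (i : Fin (M + 1)) :
    ∑ x, isingRho n M β h i x = 1 := by
  simp_rw [isingRho_eq n M hM]
  rw [sum_profile (fun k => Real.exp (((i : ℕ) : ℝ) / M * logWt n β h k) /
        partZ n β h (((i : ℕ) : ℝ) / M)), ← sum_div]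
  exact div_self (partZ_pos n β h _).ne'

lemma logWt_symm (n : ℕ) (β h : ℝ) (k : ℕ) (hk : k ≤ n) :
    logWt n β h (n - k) = logWt n β h k + β * h * (n - 2 * k) := by
  unfold logWt
  rw [Nat.choose_symm hk, Nat.cast_sub hk]
  ring

lemma logWt_abs (n : ℕ) (hn : 1 ≤ n) (β h : ℝ) (hβ : 0 < β) (k : ℕ) (hk : k ≤ n) :
    |logWt n β h k| ≤ (β * (1 + |h|) + 1) * (n : ℝ) ^ 2 := by
  have hk0 : (0 : ℝ) ≤ k := by positivity
  have hkn : (k : ℝ) ≤ n := by exact_mod_cast hk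
  have hn1 : (1 : ℝ) ≤ n := by exact_mod_cast hn
  have hnn : (n : ℝ) ≤ (n : ℝ) ^ 2 := by nlinarith
  have h1 : |((k : ℝ) ^ 2 + ((n : ℝ) - k) ^ 2 - n) / 2| ≤ (n : ℝ) ^ 2 := by
    rw [abs_le]
    constructor <;> nlinarith
  have h2 : |h * k| ≤ |h| * (n : ℝ) ^ 2 := by
    rw [abs_mul, abs_of_nonneg hk0]
    exact mul_le_mul_of_nonneg_left (by linarith) (abs_nonneg _)
  have h3 : |Real.log (n.choose k)| ≤ (n : ℝ) ^ 2 := by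
    have hC : (1 : ℝ) ≤ n.choose k := by exact_mod_cast Nat.choose_pos hk
    rw [abs_of_nonneg (Real.log_nonneg hC)]
    have : (n.choose k : ℝ) ≤ 2 ^ n := by exact_mod_cast Nat.choose_le_two_pow n k
    calc Real.log (n.choose k) ≤ Real.log (2 ^ n) := Real.log_le_log (by linarith) this
      _ = n * Real.log 2 := Real.log_pow _ _
      _ ≤ n * 1 := by
        gcongr
        exact Real.log_two_lt_d9.le.trans (by norm_num)
      _ ≤ _ := by linarith
  unfold logWt
  calc _ ≤ |β * (((k : ℝ) ^ 2 + ((n : ℝ) - k) ^ 2 - n) / 2 + h * k)| + |Real.log (n.choose k)| :=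
        abs_add_le _ _
    _ ≤ β * ((n : ℝ) ^ 2 + |h| * (n : ℝ) ^ 2) + (n : ℝ) ^ 2 := by
        gcongr
        rw [abs_mul, abs_of_pos hβ]
        gcongr
        exact (abs_add_le _ _).trans (add_le_add h1 h2)
    _ = _ := by ring

lemma logWt_step (n : ℕ) (β h : ℝ) (k : ℕ) (hk : k < n) :
    logWt n β h (k + 1) = logWt n β h k + β * (2 * k + 1 - n) + β * h -
      Real.log (((k : ℝ) + 1) / ((n : ℝ) - k)) := by
  have hc := choose_layer n k hk
  have hCk : (0 : ℝ) < n.choose k := by exact_mod_cast Nat.choose_pos hk.le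
  have hCk1 : (0 : ℝ) < n.choose (k + 1) := by exact_mod_cast Nat.choose_pos hk
  have hnk : (0 : ℝ) < (n : ℝ) - k := by
    have : (k : ℝ) < n := by exact_mod_cast hk
    linarith
  have hk1 : (0 : ℝ) < (k : ℝ) + 1 := by positivity
  have hl := congrArg Real.log hc
  rw [Real.log_mul hCk.ne' hnk.ne', Real.log_mul hCk1.ne' hk1.ne'] at hl
  unfold logWt
  rw [Real.log_div hk1.ne' hnk.ne']
  push_cast
  linear_combination -hl

/-- For large `n`, half of the interaction already beats the entropy: the entropy increment
`log ((k+1)/(n-k))` is at most half of the energy increment. -/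
lemma entropy_le_energy (β : ℝ) (hβ : 0 < β) : ∃ n₀ : ℕ, ∀ n : ℕ, n₀ ≤ n → ∀ k : ℕ, k < n →
    n ≤ 2 * k + 1 → Real.log (((k : ℝ) + 1) / ((n : ℝ) - k)) ≤ β / 2 * (2 * k + 1 - n) := by
  have ht := (Real.isLittleO_log_id_atTop.bound (show 0 < β / 4 by positivity))
  have ht2 := tendsto_natCast_atTop_atTop (R := ℝ) |>.eventually ht
  have ht3 := tendsto_natCast_atTop_atTop (R := ℝ) |>.eventually
    (Filter.eventually_ge_atTop (8 / β))
  obtain ⟨n₀, hn₀⟩ := Filter.eventually_atTop.1 (ht2.and ht3)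
  refine ⟨n₀, fun n hn k hk hnk => ?_⟩
  obtain ⟨h1, h2⟩ := hn₀ n hn
  simp only [id, Real.norm_eq_abs] at h1
  have hn0 : (0 : ℝ) < n := by exact_mod_cast (by omega : 0 < n)
  rw [abs_of_pos hn0] at h1
  have hlog : Real.log n ≤ β / 4 * n := (le_abs_self _).trans h1
  have h3 : 2 ≤ β / 4 * n := by
    rw [div_le_iff₀ hβ] at h2
    linarith
  have hk1 : ((k + 1 : ℕ) : ℝ) ≤ n := by exact_mod_cast hk
  push_cast at hk1
  have hd : (0 : ℝ) ≤ 2 * k + 1 - n := by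
    have : (n : ℝ) ≤ ((2 * k + 1 : ℕ) : ℝ) := by exact_mod_cast hnk
    push_cast at this
    linarith
  have hk0 : (0 : ℝ) ≤ k := by positivity
  have hpos : (0 : ℝ) < (n : ℝ) - k := by linarith
  rcases le_or_gt (2 / β) ((n : ℝ) - k) with hc | hc
  · have h4 := Real.log_le_sub_one_of_pos (show 0 < ((k : ℝ) + 1) / ((n : ℝ) - k) by positivity)
    refine h4.trans ?_
    have e : ((k : ℝ) + 1) / ((n : ℝ) - k) - 1 = (2 * k + 1 - n) / ((n : ℝ) - k) := by
      field_simp; ring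
    rw [e, div_le_iff₀ hpos]
    rw [div_le_iff₀ hβ] at hc
    nlinarith
  · have h5 : Real.log (((k : ℝ) + 1) / ((n : ℝ) - k)) ≤ Real.log n := by
      refine Real.log_le_log (by positivity) ?_
      rw [div_le_iff₀ hpos]
      nlinarith
    rw [lt_div_iff₀ hβ] at hc
    nlinarith

/-- Consequences of `entropy_le_energy`: on the plus side the profile increases (for `h ≥ 0`),
and on the minus side it increases towards the all-minus state up to an additive constant. -/
lemma logWt_shape (β : ℝ) (hβ : 0 < β) : ∃ n₀ : ℕ, ∀ n : ℕ, n₀ ≤ n → ∀ h : ℝ, 0 ≤ h →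
    (∀ k r, n ≤ 2 * k → k ≤ r → r ≤ n → logWt n β h k ≤ logWt n β h r) ∧
    (∀ k r, 2 * k ≤ n → r ≤ k → logWt n β h k ≤ logWt n β h r + β * h ^ 2 / 2) := by
  obtain ⟨n₀, hn₀⟩ := entropy_le_energy β hβ
  refine ⟨n₀, fun n hn h hh => ⟨fun k r hk hkr hr => ?_, fun k r hk hr => ?_⟩⟩
  · induction r, hkr using Nat.le_induction with
    | base => exact le_rfl
    | succ r hkr ih =>
      refine (ih (by omega)).trans ?_
      rw [logWt_step n β h r (by omega)]
      have h1 := hn₀ n hn r (by omega) (by omega)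
      have hd : (0 : ℝ) ≤ 2 * r + 1 - n := by
        have : (n : ℝ) ≤ ((2 * r + 1 : ℕ) : ℝ) := by exact_mod_cast (by omega)
        push_cast at this
        linarith
      nlinarith [mul_nonneg hβ.le hh, mul_nonneg hβ.le hd]
  · have key : ∀ p r : ℕ, r + p = k →
        logWt n β h k ≤ logWt n β h r + β * (h * p - (p : ℝ) ^ 2 / 2) := by
      intro p
      induction p with
      | zero => intro r hr; simp at hr; simp [hr]
      | succ p ih =>
        intro r hr
        have h1 := ih (r + 1) (by omega)
        rw [logWt_step n β h r (by omega)] at h1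
        have h2 := hn₀ n hn (n - 1 - r) (by omega) (by omega)
        have hc : ((n - 1 - r : ℕ) : ℝ) = n - 1 - r := by
          rw [Nat.cast_sub (by omega), Nat.cast_sub (by omega)]; simp
        rw [hc] at h2
        have e : ((n : ℝ) - 1 - r + 1) / ((n : ℝ) - (n - 1 - r)) =
            (((r : ℝ) + 1) / ((n : ℝ) - r))⁻¹ := by
          rw [inv_div]; congr 1 <;> ring
        rw [e, Real.log_inv] at h2
        have hn2 : (2 : ℝ) * (r + p + 1) ≤ n := by
          exact_mod_cast (by omega : 2 * (r + p + 1) ≤ n)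
        push_cast
        nlinarith
    refine (key (k - r) r (by omega)).trans ?_
    nlinarith [mul_nonneg hβ.le (sq_nonneg (((k - r : ℕ) : ℝ) - h))]

/-! ### Comparing the two phases -/

/-- One pair of terms in the monotonicity of the phase masses. Here `a`, `b` are the
log-weights at `r` (plus side) and `l` (minus side), and `b + s`, `a - t` those at the mirror
images `n - l` and `n - r`. -/
lemma phase_pair (a b s t θ δ : ℝ) (hθ : 0 ≤ θ) (hδ : 0 ≤ δ) (hs : 0 ≤ s) (ht : 0 ≤ t)
    (hcmp : (b + s ≤ a ∧ s ≤ t) ∨ (a ≤ b + s ∧ t ≤ s)) :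
    0 ≤ (Real.exp ((θ + δ) * a + θ * b) - Real.exp (θ * a + (θ + δ) * b)) +
      (Real.exp ((θ + δ) * (b + s) + θ * (a - t)) -
        Real.exp (θ * (b + s) + (θ + δ) * (a - t))) := by
  have e1 : Real.exp ((θ + δ) * a + θ * b) = Real.exp (θ * (a + b)) * Real.exp (δ * a) := by
    rw [← Real.exp_add]; ring_nf
  have e2 : Real.exp (θ * a + (θ + δ) * b) = Real.exp (θ * (a + b)) * Real.exp (δ * b) := by
    rw [← Real.exp_add]; ring_nf
  have e3 : Real.exp ((θ + δ) * (b + s) + θ * (a - t)) =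
      Real.exp (θ * (a + b)) * (Real.exp (θ * (s - t)) * Real.exp (δ * (b + s))) := by
    rw [← Real.exp_add, ← Real.exp_add]; ring_nf
  have e4 : Real.exp (θ * (b + s) + (θ + δ) * (a - t)) =
      Real.exp (θ * (a + b)) * (Real.exp (θ * (s - t)) * Real.exp (δ * (a - t))) := by
    rw [← Real.exp_add, ← Real.exp_add]; ring_nf
  rw [e1, e2, e3, e4]
  have hmain : 0 ≤ (Real.exp (δ * a) - Real.exp (δ * b)) +
      Real.exp (θ * (s - t)) * (Real.exp (δ * (b + s)) - Real.exp (δ * (a - t))) := by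
    have m1 : Real.exp (δ * b) ≤ Real.exp (δ * (b + s)) :=
      Real.exp_le_exp.2 (mul_le_mul_of_nonneg_left (by linarith) hδ)
    have m2 : Real.exp (δ * (a - t)) ≤ Real.exp (δ * a) :=
      Real.exp_le_exp.2 (mul_le_mul_of_nonneg_left (by linarith) hδ)
    have hE := Real.exp_pos (θ * (s - t))
    rcases hcmp with ⟨h1, h2⟩ | ⟨h1, h2⟩
    · have m3 : Real.exp (δ * (b + s)) ≤ Real.exp (δ * a) :=
        Real.exp_le_exp.2 (mul_le_mul_of_nonneg_left h1 hδ)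
      have hE1 : Real.exp (θ * (s - t)) ≤ 1 := by
        rw [Real.exp_le_one_iff]
        exact mul_nonpos_of_nonneg_of_nonpos hθ (by linarith)
      nlinarith
    · have m3 : Real.exp (δ * a) ≤ Real.exp (δ * (b + s)) :=
        Real.exp_le_exp.2 (mul_le_mul_of_nonneg_left h1 hδ)
      have hE1 : 1 ≤ Real.exp (θ * (s - t)) := by
        rw [Real.one_le_exp_iff]
        exact mul_nonneg hθ (by linarith)
      nlinarith
  have := mul_nonneg (Real.exp_pos (θ * (a + b))).le hmain
  linarith

/-- Weight of the plus phase (strict majority of plus spins) at exponent `θ`. -/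
noncomputable def plusZ (n : ℕ) (β h θ : ℝ) : ℝ :=
  ∑ k ∈ (range (n + 1)).filter (fun k => n < 2 * k), Real.exp (θ * logWt n β h k)

/-- Weight of the minus phase (ties included) at exponent `θ`. -/
noncomputable def minusZ (n : ℕ) (β h θ : ℝ) : ℝ :=
  ∑ k ∈ (range (n + 1)).filter (fun k => ¬ n < 2 * k), Real.exp (θ * logWt n β h k)

lemma plusZ_add_minusZ (n : ℕ) (β h θ : ℝ) : plusZ n β h θ + minusZ n β h θ = partZ n β h θ :=
  sum_filter_add_sum_filter_not _ _ _

lemma plusZ_pos (n : ℕ) (hn : 1 ≤ n) (β h θ : ℝ) : 0 < plusZ n β h θ :=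
  sum_pos (fun _ _ => Real.exp_pos _) ⟨n, by simp; omega⟩

lemma minusZ_pos (n : ℕ) (β h θ : ℝ) : 0 < minusZ n β h θ :=
  sum_pos (fun _ _ => Real.exp_pos _) ⟨0, by simp⟩

/-- For `h ≥ 0` the odds of the plus phase increase with the exponent. -/
lemma phase_odds_mono (n : ℕ) (β h θ δ : ℝ) (hβ : 0 < β) (hh : 0 ≤ h) (hθ : 0 ≤ θ) (hδ : 0 ≤ δ)
    (hinc : ∀ k r, n ≤ 2 * k → k ≤ r → r ≤ n → logWt n β h k ≤ logWt n β h r) :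
    plusZ n β h θ * minusZ n β h (θ + δ) ≤ plusZ n β h (θ + δ) * minusZ n β h θ := by
  set ψ := logWt n β h with hψ
  set R := (range (n + 1)).filter (fun k => n < 2 * k) with hR
  set L := (range (n + 1)).filter (fun k => ¬ n < 2 * k) with hL
  set L' := L.filter (fun k => 2 * k < n) with hL'
  set T : ℕ → ℕ → ℝ := fun r l => Real.exp ((θ + δ) * ψ r + θ * ψ l) -
    Real.exp (θ * ψ r + (θ + δ) * ψ l) with hT
  have hdiff : plusZ n β h (θ + δ) * minusZ n β h θ - plusZ n β h θ * minusZ n β h (θ + δ) =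
      ∑ r ∈ R, ∑ l ∈ L, T r l := by
    unfold plusZ minusZ
    rw [sum_mul_sum, sum_mul_sum, ← sum_sub_distrib]
    refine sum_congr rfl fun r _ => ?_
    rw [← sum_sub_distrib]
    refine sum_congr rfl fun l _ => ?_
    simp only [hT, Real.exp_add]
    ring
  have hRm : ∀ r, r ∈ R ↔ r ≤ n ∧ n < 2 * r := by
    intro r; simp [hR]
  have hLm : ∀ l, l ∈ L' ↔ 2 * l < n := by
    intro l; simp [hL', hL]; omega
  have hsplit : ∀ r ∈ R, ∑ l ∈ L', T r l ≤ ∑ l ∈ L, T r l := by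
    intro r hr
    rw [hRm] at hr
    rw [← sum_filter_add_sum_filter_not L (fun k => 2 * k < n)]
    refine le_add_of_nonneg_right (sum_nonneg fun l hl => ?_)
    simp only [hL, mem_filter] at hl
    -- only the tied layer `2 * l = n` is left here
    have h1 := hinc l r (by omega) (by omega) hr.1
    simp only [hT, sub_nonneg]
    refine Real.exp_le_exp.2 ?_
    nlinarith
  have hrefl : ∑ x ∈ R ×ˢ L', T x.1 x.2 = ∑ x ∈ R ×ˢ L', T (n - x.2) (n - x.1) := by
    refine sum_nbij' (fun x => (n - x.2, n - x.1)) (fun x => (n - x.2, n - x.1)) ?_ ?_ ?_ ?_ ?_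
    · rintro ⟨r, l⟩ hx
      simp only [mem_product, hRm, hLm] at hx ⊢
      omega
    · rintro ⟨r, l⟩ hx
      simp only [mem_product, hRm, hLm] at hx ⊢
      omega
    · rintro ⟨r, l⟩ hx
      simp only [mem_product, hRm, hLm, Prod.mk.injEq] at hx ⊢
      omega
    · rintro ⟨r, l⟩ hx
      simp only [mem_product, hRm, hLm, Prod.mk.injEq] at hx ⊢
      omega
    · rintro ⟨r, l⟩ hx
      simp only [mem_product, hRm, hLm] at hx
      have h1 : n - (n - r) = r := by omega
      have h2 : n - (n - l) = l := by omega
      simp only [h1, h2]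
  have hpair : 0 ≤ ∑ x ∈ R ×ˢ L', (T x.1 x.2 + T (n - x.2) (n - x.1)) := by
    refine sum_nonneg ?_
    rintro ⟨r, l⟩ hx
    simp only [mem_product, hRm, hLm] at hx
    obtain ⟨⟨hr1, hr2⟩, hl⟩ := hx
    have hrR : (n : ℝ) ≤ 2 * r := by exact_mod_cast hr2.le
    have hlR : 2 * (l : ℝ) ≤ n := by exact_mod_cast hl.le
    have hβh : 0 ≤ β * h := mul_nonneg hβ.le hh
    have e1 : ψ (n - l) = ψ l + β * h * (n - 2 * l) := logWt_symm n β h l (by omega)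
    have e2 : ψ (n - r) = ψ r - β * h * (2 * r - n) := by
      rw [hψ, logWt_symm n β h r hr1]; ring
    have key := phase_pair (ψ r) (ψ l) (β * h * (n - 2 * l)) (β * h * (2 * r - n)) θ δ hθ hδ
      (mul_nonneg hβh (by linarith)) (mul_nonneg hβh (by linarith)) (by
        rcases le_total (n - l) r with hc | hc
        · left
          refine ⟨?_, ?_⟩
          · rw [← e1]; exact hinc _ _ (by omega) hc hr1
          · refine mul_le_mul_of_nonneg_left ?_ hβh
            have : (n : ℝ) ≤ r + l := by exact_mod_cast (by omega : n ≤ r + l)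
            linarith
        · right
          refine ⟨?_, ?_⟩
          · rw [← e1]; exact hinc _ _ (by omega) hc (by omega)
          · refine mul_le_mul_of_nonneg_left ?_ hβh
            have : (r : ℝ) + l ≤ n := by exact_mod_cast (by omega : r + l ≤ n)
            linarith)
    simp only [hT]
    rw [e1, e2]
    exact key
  rw [sum_add_distrib, ← hrefl, sum_product] at hpair
  have := sum_le_sum hsplit
  linarith

lemma phase_balance (n : ℕ) (hn : 1 ≤ n) (β h θ : ℝ) (hβ : 0 < β) (hh : 0 ≤ h) (hθ : 0 ≤ θ)
    (hinc : ∀ k r, n ≤ 2 * k → k ≤ r → r ≤ n → logWt n β h k ≤ logWt n β h r) :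
    minusZ n β h θ ≤ 2 * plusZ n β h θ := by
  set ψ := logWt n β h with hψ
  have h1 : minusZ n β h θ ≤
      ∑ k ∈ (range (n + 1)).filter (fun k => n ≤ 2 * k), Real.exp (θ * ψ k) := by
    unfold minusZ
    rw [show (∑ k ∈ (range (n + 1)).filter (fun k => n ≤ 2 * k), Real.exp (θ * ψ k)) =
      ∑ k ∈ (range (n + 1)).filter (fun k => ¬ n < 2 * k), Real.exp (θ * ψ (n - k)) from by
        refine sum_nbij' (fun k => n - k) (fun k => n - k) ?_ ?_ ?_ ?_ ?_
        · intro k hk; simp only [mem_filter, mem_range] at hk ⊢; omega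
        · intro k hk; simp only [mem_filter, mem_range] at hk ⊢; omega
        · intro k hk; simp only [mem_filter, mem_range] at hk ⊢; omega
        · intro k hk; simp only [mem_filter, mem_range] at hk ⊢; omega
        · intro k hk
          simp only [mem_filter, mem_range] at hk
          rw [show n - (n - k) = k by omega]]
    refine sum_le_sum fun k hk => Real.exp_le_exp.2 (mul_le_mul_of_nonneg_left ?_ hθ)
    simp only [mem_filter, mem_range] at hk
    rw [hψ, logWt_symm n β h k (by omega)]
    have : 2 * (k : ℝ) ≤ n := by exact_mod_cast (by omega : 2 * k ≤ n)
    have := mul_nonneg (mul_nonneg hβ.le hh) (sub_nonneg.2 this)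
    linarith
  have h2 : ∑ k ∈ (range (n + 1)).filter (fun k => n ≤ 2 * k), Real.exp (θ * ψ k) ≤
      plusZ n β h θ + Real.exp (θ * ψ n) := by
    rw [← sum_filter_add_sum_filter_not _ (fun k => n < 2 * k), filter_filter, filter_filter]
    refine add_le_add (le_of_eq ?_) ?_
    · unfold plusZ
      refine sum_congr ?_ fun _ _ => rfl
      ext k; simp only [mem_filter, mem_range]; omega
    · refine (sum_le_card_nsmul _ _ (Real.exp (θ * ψ n)) fun k hk => ?_).trans ?_
      · simp only [mem_filter, mem_range] at hk
        exact Real.exp_le_exp.2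
          (mul_le_mul_of_nonneg_left (hinc k n (by omega) (by omega) le_rfl) hθ)
      · rw [nsmul_eq_mul]
        refine mul_le_of_le_one_left (Real.exp_pos _).le ?_
        norm_cast
        refine card_le_one.2 fun a ha b hb => ?_
        simp only [mem_filter, mem_range] at ha hb
        omega
  have h3 : Real.exp (θ * ψ n) ≤ plusZ n β h θ :=
    single_le_sum (f := fun k => Real.exp (θ * ψ k)) (fun _ _ => (Real.exp_pos _).le)
      (by simp only [mem_filter, mem_range]; omega)
  linarith

/-! ### Spectral gap of the Flat-swap chain -/

lemma profile_dom (n : ℕ) (β h θ D : ℝ) (k r : ℕ) (hθ0 : 0 ≤ θ) (hθ1 : θ ≤ 1) (hD : 0 ≤ D)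
    (hkr : logWt n β h k ≤ logWt n β h r + D) :
    Real.exp (θ * logWt n β h k) / partZ n β h θ ≤
      Real.exp D * (Real.exp (θ * logWt n β h r) / partZ n β h θ) := by
  rw [← mul_div_assoc, ← Real.exp_add]
  refine div_le_div_of_nonneg_right (Real.exp_le_exp.2 ?_) (partZ_pos n β h θ).le
  nlinarith

lemma layers_assemble {n : ℕ} (f : (Fin n → Bool) → ℝ) (X : ℝ)
    (hX : ∀ k, k ≤ n → ∑ x, (if plusCount n x = k then f x else 0) ≤ X) :
    ∑ x, f x ≤ ((n : ℝ) + 1) * X := by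
  rw [sum_layers]
  refine (sum_le_card_nsmul _ _ X fun k hk => hX k ?_).trans (le_of_eq ?_)
  · have := mem_range.1 hk; omega
  · simp

lemma exponent_nonneg {M : ℕ} (i : Fin (M + 1)) : (0 : ℝ) ≤ ((i : ℕ) : ℝ) / M := by positivity

lemma exponent_le_one {M : ℕ} (i : Fin (M + 1)) : ((i : ℕ) : ℝ) / M ≤ 1 := by
  refine div_le_one_of_le₀ ?_ (by positivity)
  exact_mod_cast Nat.lt_succ_iff.1 i.2

/-- If the profile is within a factor `e^D` of being increasing, then level `i` satisfies a
Poincaré inequality on the whole state space. -/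
lemma ising_level_poincare (n M : ℕ) (hM : 0 < M) (β h D : ℝ) (i : Fin (M + 1))
    (hdom : ∀ k r, k ≤ r → r ≤ n → ((i : ℕ) : ℝ) / M * logWt n β h k ≤
      ((i : ℕ) : ℝ) / M * logWt n β h r + D)
    (g : (Fin n → Bool) → ℝ) :
    ∑ x, isingRho n M β h i x * (g x - g (fun _ => true)) ^ 2 ≤
      2 * n * (n + 1) ^ 2 * Real.exp D * levelForm (isingProp n) (isingRho n M β h i) g := by
  refine (layers_assemble _ _ fun k hk => layer_up (fun k =>
    Real.exp (((i : ℕ) : ℝ) / M * logWt n β h k) / partZ n β h (((i : ℕ) : ℝ) / M))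
    (isingRho n M β h i) g (Real.exp D) k (Real.exp_pos D).le
    (fun r => div_nonneg (Real.exp_pos _).le (partZ_pos _ _ _ _).le)
    (isingRho_eq n M hM β h i) hk fun r hkr hr => ?_).trans (le_of_eq (by ring))
  rw [← mul_div_assoc, ← Real.exp_add]
  refine div_le_div_of_nonneg_right (Real.exp_le_exp.2 ?_) (partZ_pos n β h _).le
  linarith [hdom k r hkr hr]

/-- Indicator of the plus phase (strict majority of plus spins). -/
def plusPhase (n : ℕ) (x : Fin n → Bool) : Bool := decide (n < 2 * plusCount n x)

lemma modeWt_plus (n M : ℕ) (hM : 0 < M) (β h : ℝ) (i : Fin (M + 1)) :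
    modeWt (isingRho n M β h) (plusPhase n) i true =
      plusZ n β h (((i : ℕ) : ℝ) / M) / partZ n β h (((i : ℕ) : ℝ) / M) := by
  unfold modeWt plusZ
  let φ : ℕ → ℝ := fun k => if n < 2 * k then Real.exp (((i : ℕ) : ℝ) / M * logWt n β h k) /
    partZ n β h (((i : ℕ) : ℝ) / M) else 0
  have e : ∀ x : Fin n → Bool, (if plusPhase n x = true then isingRho n M β h i x else 0) =
      φ (plusCount n x) / n.choose (plusCount n x) := by
    intro x
    rw [isingRho_eq n M hM]
    simp only [φ, plusPhase, decide_eq_true_eq]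
    split_ifs <;> simp
  rw [sum_congr rfl fun x _ => e x, sum_profile φ, ← sum_filter, sum_div]

lemma modeWt_minus (n M : ℕ) (hM : 0 < M) (β h : ℝ) (i : Fin (M + 1)) :
    modeWt (isingRho n M β h) (plusPhase n) i false =
      minusZ n β h (((i : ℕ) : ℝ) / M) / partZ n β h (((i : ℕ) : ℝ) / M) := by
  unfold modeWt minusZ
  let φ : ℕ → ℝ := fun k => if ¬ n < 2 * k then Real.exp (((i : ℕ) : ℝ) / M * logWt n β h k) /
    partZ n β h (((i : ℕ) : ℝ) / M) else 0
  have e : ∀ x : Fin n → Bool, (if plusPhase n x = false then isingRho n M β h i x else 0) =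
      φ (plusCount n x) / n.choose (plusCount n x) := by
    intro x
    rw [isingRho_eq n M hM]
    simp only [φ, plusPhase, decide_eq_false_iff_not]
    split_ifs <;> simp
  rw [sum_congr rfl fun x _ => e x, sum_profile φ, ← sum_filter, sum_div]

/-- Densities whose exponents differ by at most `1/M` differ by a bounded factor. -/
lemma isingRho_ratio (n M : ℕ) (hM : 0 < M) (β h A : ℝ)
    (hA : ∀ k, k ≤ n → |logWt n β h k| ≤ A * M) (i j : Fin (M + 1))
    (hij : |((i : ℕ) : ℝ) - (j : ℕ)| ≤ 1) (x : Fin n → Bool) :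
    isingRho n M β h i x ≤ Real.exp (2 * A) * isingRho n M β h j x := by
  have hM' : (0 : ℝ) < M := by exact_mod_cast hM
  have hexp : ∀ i j : Fin (M + 1), |((i : ℕ) : ℝ) - (j : ℕ)| ≤ 1 → ∀ k, k ≤ n →
      Real.exp (((i : ℕ) : ℝ) / M * logWt n β h k) ≤
        Real.exp A * Real.exp (((j : ℕ) : ℝ) / M * logWt n β h k) := by
    intro i j hij k hk
    rw [← Real.exp_add]
    refine Real.exp_le_exp.2 ?_
    have h1 : (((i : ℕ) : ℝ) - (j : ℕ)) * logWt n β h k ≤ A * M := by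
      refine (le_abs_self _).trans ?_
      rw [abs_mul]
      calc _ ≤ 1 * |logWt n β h k| := mul_le_mul_of_nonneg_right hij (abs_nonneg _)
        _ ≤ _ := by rw [one_mul]; exact hA k hk
    have h2 : (((i : ℕ) : ℝ) - (j : ℕ)) * logWt n β h k / M ≤ A := by
      rw [div_le_iff₀ hM']; exact h1
    have h3 : (((i : ℕ) : ℝ) - (j : ℕ)) * logWt n β h k / M =
        ((i : ℕ) : ℝ) / M * logWt n β h k - ((j : ℕ) : ℝ) / M * logWt n β h k := by ring
    linarith
  have hZ : partZ n β h (((j : ℕ) : ℝ) / M) ≤ Real.exp A * partZ n β h (((i : ℕ) : ℝ) / M) := by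
    unfold partZ
    rw [mul_sum]
    refine sum_le_sum fun k hk => hexp j i (by rwa [abs_sub_comm]) k ?_
    have := mem_range.1 hk; omega
  have hx := hexp i j hij (plusCount n x) (plusCount_le x)
  rw [isingRho_eq n M hM, isingRho_eq n M hM, ← mul_div_assoc]
  refine div_le_div_of_nonneg_right ?_ (by positivity)
  have hZi := partZ_pos n β h (((i : ℕ) : ℝ) / M)
  have hZj := partZ_pos n β h (((j : ℕ) : ℝ) / M)
  rw [← mul_div_assoc, div_le_div_iff₀ hZi hZj]
  calc _ ≤ (Real.exp A * Real.exp (((j : ℕ) : ℝ) / M * logWt n β h (plusCount n x))) *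
        (Real.exp A * partZ n β h (((i : ℕ) : ℝ) / M)) :=
        mul_le_mul hx hZ hZj.le (by positivity)
    _ = _ := by
        rw [show 2 * A = A + A by ring, Real.exp_add]; ring

/-- For a nonnegative field, and a profile that is monotone towards the two aligned states up to a
constant, the Ising levels form a two-mode family. -/
lemma ising_twoModes (n M : ℕ) (hn : 1 ≤ n) (hnM : n ^ 2 ≤ M) (β h : ℝ) (hβ : 0 < β) (hh : 0 ≤ h)
    (hinc : ∀ k r, n ≤ 2 * k → k ≤ r → r ≤ n → logWt n β h k ≤ logWt n β h r)
    (hdec : ∀ k r, 2 * k ≤ n → r ≤ k → logWt n β h k ≤ logWt n β h r + β * h ^ 2 / 2) :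
    TwoModes (isingProp n) (isingRho n M β h) (plusPhase n)
      (2 * n * (n + 1) ^ 2 * Real.exp (β * h ^ 2 / 2))
      (Real.exp (2 * (β * (1 + |h|) + 1))) 2 := by
  have hM : 0 < M := lt_of_lt_of_le (by positivity) hnM
  have hM' : (0 : ℝ) < M := by exact_mod_cast hM
  have hD : 0 ≤ β * h ^ 2 / 2 := by positivity
  have hA : ∀ k, k ≤ n → |logWt n β h k| ≤ (β * (1 + |h|) + 1) * M := by
    intro k hk
    refine (logWt_abs n hn β h hβ k hk).trans ?_
    have : ((n : ℝ)) ^ 2 ≤ M := by exact_mod_cast hnM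
    gcongr
  refine ⟨isingProp_nonneg, isingRho_pos n M hM β h, isingRho_sum n M hM β h, ?_, by norm_num,
    by positivity, ?_, ?_, ?_, ?_, ?_, ?_, ?_⟩
  · rw [Real.one_le_exp_iff]; positivity
  · intro i g
    refine ⟨fun b => if b then g (fun _ => true) else g (fun _ => false), ?_⟩
    refine (layers_assemble _ (2 * n * (n + 1) * Real.exp (β * h ^ 2 / 2) *
      levelForm (isingProp n) (isingRho n M β h i) g) fun k hk => ?_).trans (le_of_eq (by ring))
    have hφ : ∀ r, 0 ≤ Real.exp (((i : ℕ) : ℝ) / M * logWt n β h r) /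
        partZ n β h (((i : ℕ) : ℝ) / M) :=
      fun r => div_nonneg (Real.exp_pos _).le (partZ_pos _ _ _ _).le
    by_cases hk2 : n < 2 * k
    · refine le_trans (le_of_eq ?_) (layer_up _ (isingRho n M β h i) g _ k (Real.exp_pos _).le hφ
        (isingRho_eq n M hM β h i) hk fun r hkr hr => profile_dom n β h _ _ k r
          (exponent_nonneg i) (exponent_le_one i) hD ?_)
      · refine sum_congr rfl fun x _ => ?_
        split_ifs with h1
        · simp [plusPhase, h1, hk2]
        · rfl
      · linarith [hinc k r hk2.le hkr hr]
    · refine le_trans (le_of_eq ?_) (layer_down _ (isingRho n M β h i) g _ k (Real.exp_pos _).le hφ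
        (isingRho_eq n M hM β h i) hk fun r hkr => profile_dom n β h _ _ k r
          (exponent_nonneg i) (exponent_le_one i) hD (hdec k r (by omega) hkr))
      refine sum_congr rfl fun x _ => ?_
      split_ifs with h1
      · simp [plusPhase, h1, hk2]
      · rfl
  · intro g
    refine ⟨g (fun _ => true), ?_⟩
    refine ising_level_poincare n M hM β h _ 0 (fun k r _ _ => ?_) g
    simpa using hD
  · intro j a
    refine isingRho_ratio n M hM β h _ hA _ _ ?_ a
    simp
  · intro j a
    refine isingRho_ratio n M hM β h _ hA _ _ ?_ a
    simp
  · intro i b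
    cases b
    · rw [modeWt_minus n M hM]
      exact div_pos (minusZ_pos _ _ _ _) (partZ_pos _ _ _ _)
    · rw [modeWt_plus n M hM]
      exact div_pos (plusZ_pos n hn _ _ _) (partZ_pos _ _ _ _)
  · intro j
    rw [modeWt_plus n M hM, modeWt_plus n M hM,
      div_le_div_iff₀ (partZ_pos _ _ _ _) (partZ_pos _ _ _ _), ← plusZ_add_minusZ,
      ← plusZ_add_minusZ]
    have e : (((j.succ : Fin (M + 1)) : ℕ) : ℝ) / M =
        (((j.castSucc : Fin (M + 1)) : ℕ) : ℝ) / M + 1 / M := by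
      simp; ring
    rw [e]
    have := phase_odds_mono n β h ((((j.castSucc : Fin (M + 1)) : ℕ) : ℝ) / M) (1 / M) hβ hh
      (exponent_nonneg _) (by positivity) hinc
    nlinarith
  · intro i
    rw [modeWt_plus n M hM, modeWt_minus n M hM, ← mul_div_assoc]
    exact div_le_div_of_nonneg_right (phase_balance n hn β h _ hβ hh (exponent_nonneg i) hinc)
      (partZ_pos _ _ _ _).le

lemma isingRho_revSpins (n M : ℕ) (hM : 0 < M) (β h : ℝ) (i : Fin (M + 1)) (x : Fin n → Bool) :
    isingRho n M β h i (revSpins x) = isingRho n M β (-h) i x := by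
  have hUn : ∀ x : Fin n → Bool, isingRhoUn n M β h i (revSpins x) =
      Real.exp (((i : ℕ) : ℝ) / M * (β * h * n)) * isingRhoUn n M β (-h) i x := by
    intro x
    rw [isingRhoUn_eq n M hM, isingRhoUn_eq n M hM, plusCount_revSpins,
      Nat.choose_symm (plusCount_le x), ← mul_div_assoc, ← Real.exp_add,
      logWt_symm n β h _ (plusCount_le x)]
    congr 2
    unfold logWt
    ring
  unfold isingRho
  rw [← sum_revSpins, hUn]
  simp_rw [hUn]
  rw [← mul_sum, mul_div_mul_left _ _ (Real.exp_pos _).ne']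

lemma twoModes_reverse {n M : ℕ} (hM : 0 < M) {β h C K B : ℝ} {m : (Fin n → Bool) → Bool}
    (H : TwoModes (isingProp n) (isingRho n M β h) m C K B) :
    TwoModes (isingProp n) (isingRho n M β (-h)) (fun x => m (revSpins x)) C K B := by
  have e : ∀ i x, isingRho n M β (-h) i x = isingRho n M β h i (revSpins x) :=
    fun i x => (isingRho_revSpins n M hM β h i x).symm
  have e' : ∀ i, isingRho n M β (-h) i = fun x => isingRho n M β h i (revSpins x) :=
    fun i => funext (e i)
  have hw : ∀ i b, modeWt (isingRho n M β (-h)) (fun x => m (revSpins x)) i b =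
      modeWt (isingRho n M β h) m i b := by
    intro i b
    unfold modeWt
    simp_rw [e]
    exact sum_revSpins (fun x => if m x = b then isingRho n M β h i x else 0)
  have hform : ∀ i g, levelForm (isingProp n) (isingRho n M β (-h) i) g =
      levelForm (isingProp n) (isingRho n M β h i) (fun x => g (revSpins x)) := by
    intro i g
    rw [e', ← levelForm_revSpins (isingRho n M β h i)]
    simp_rw [revSpins_revSpins]
  refine ⟨H.prop_nonneg, isingRho_pos n M hM β _, isingRho_sum n M hM β _, H.one_le_K,
    H.B_nonneg, H.C_nonneg, ?_, ?_, ?_, ?_, ?_, ?_, ?_⟩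
  · intro i g
    obtain ⟨c, hc⟩ := H.local_poincare i (fun x => g (revSpins x))
    refine ⟨c, ?_⟩
    rw [hform]
    refine le_trans (le_of_eq ?_) hc
    rw [← sum_revSpins]
    simp_rw [e, revSpins_revSpins]
  · intro g
    obtain ⟨c, hc⟩ := H.hot_poincare (fun x => g (revSpins x))
    refine ⟨c, ?_⟩
    rw [hform]
    refine le_trans (le_of_eq ?_) hc
    rw [← sum_revSpins]
    simp_rw [e, revSpins_revSpins]
  · intro j a; rw [e, e]; exact H.ratio_up j _
  · intro j a; rw [e, e]; exact H.ratio_down j _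
  · intro i b; rw [hw]; exact H.mode_pos i b
  · intro j; rw [hw, hw]; exact H.mono j
  · intro i; rw [hw, hw]; exact H.balance i

/-- Without modes: if every level has a Poincaré inequality, tensorization alone suffices. -/
lemma poincare_of_levels {n M : ℕ} (hM : 0 < M) (β h C : ℝ)
    (hC : ∀ i (g : (Fin n → Bool) → ℝ),
      ∑ x, isingRho n M β h i x * (g x - g (fun _ => true)) ^ 2 ≤
        C * levelForm (isingProp n) (isingRho n M β h i) g)
    (F : (Fin (M + 1) → (Fin n → Bool)) → ℝ) :
    ∑ x, prodWt (isingRho n M β h) x * F x ^ 2 -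
      (∑ x, prodWt (isingRho n M β h) x * F x) ^ 2 ≤
      C * levelEnergy (isingProp n) (isingRho n M β h) F := by
  set p := isingRho n M β h with hp
  have hpos : ∀ i a, 0 < p i a := isingRho_pos n M hM β h
  have hsum : ∀ i, ∑ a, p i a = 1 := isingRho_sum n M hM β h
  have hES := efron_stein (M + 1) p (fun i a => (hpos i a).le) hsum F
    (fun i x => F (Function.update x i (fun _ => true))) (by intro i x a; simp)
  refine hES.trans ?_
  unfold levelEnergy
  rw [mul_sum]
  refine sum_le_sum fun i _ => ?_
  rw [← resample_self p i (hsum i), mul_sum]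
  refine sum_le_sum fun x _ => ?_
  have := mul_le_mul_of_nonneg_left (hC i (fun a => F (Function.update x i a)))
    (prodWt_pos hpos x).le
  simp only [Function.update_idem]
  linarith

/-- Polynomial bound on the relaxation time of the Flat-swap chain. -/
lemma ising_gap (β : ℝ) (hβ : 0 < β) (h : ℝ) (k : ℕ) : ∃ Bc : ℝ, 1 ≤ Bc ∧
    ∀ n : ℕ, 2 ≤ n → ∀ M : ℕ, n ^ 2 ≤ M → M ≤ n ^ k → ∀ F : (Fin (M + 1) → (Fin n → Bool)) → ℝ,
      ∑ x, prodWt (isingRho n M β h) x * F x ^ 2 -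
        (∑ x, prodWt (isingRho n M β h) x * F x) ^ 2 ≤
      (Bc * (n : ℝ) ^ (3 * k + 3)) * (levelEnergy (isingProp n) (isingRho n M β h) F +
        ∑ j, swapEnergyAt (isingRho n M β h) F j) := by
  obtain ⟨n₀, hn₀⟩ := logWt_shape β hβ
  set A := β * (1 + |h|) + 1 with hAdef
  have hA0 : 0 ≤ A := by positivity
  set D := β * h ^ 2 / 2 with hDdef
  have hD0 : 0 ≤ D := by positivity
  set Bc := 31 * 64 * Real.exp (D + 8 * A + 2 * A * (n₀ : ℝ) ^ 2) with hBc
  have hexp1 : 1 ≤ Real.exp (D + 8 * A + 2 * A * (n₀ : ℝ) ^ 2) := by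
    rw [Real.one_le_exp_iff]; positivity
  refine ⟨Bc, by rw [hBc]; linarith, fun n hn M hnM hMk F => ?_⟩
  have hM : 0 < M := lt_of_lt_of_le (by positivity) hnM
  have hnR : (2 : ℝ) ≤ n := by exact_mod_cast hn
  have hn1 : (n : ℝ) + 1 ≤ 2 * n := by linarith
  have hpos := isingRho_pos n M hM β h
  have hL0 : 0 ≤ levelEnergy (isingProp n) (isingRho n M β h) F := by
    refine sum_nonneg fun i _ => sum_nonneg fun x _ => mul_nonneg (prodWt_pos hpos x).le ?_
    refine sum_nonneg fun a _ => sum_nonneg fun b _ => ?_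
    have h1 := isingProp_nonneg a b
    have h2 := (hpos i a).le
    have h3 := (hpos i b).le
    positivity
  have hS0 : 0 ≤ ∑ j, swapEnergyAt (isingRho n M β h) F j :=
    sum_nonneg fun j _ => sum_nonneg fun x _ => mul_nonneg (le_min (prodWt_pos hpos _).le
      (prodWt_pos hpos _).le) (sq_nonneg _)
  have hC8 : 2 * (n : ℝ) * (n + 1) ^ 2 ≤ 8 * (n : ℝ) ^ 3 := by
    calc 2 * (n : ℝ) * (n + 1) ^ 2 ≤ 2 * (n : ℝ) * (2 * n) ^ 2 := by gcongr
      _ = _ := by ring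
  have hMR : (M : ℝ) + 1 ≤ 2 * (n : ℝ) ^ k := by
    have h1 : (M : ℝ) ≤ (n : ℝ) ^ k := by exact_mod_cast hMk
    have h2 : (1 : ℝ) ≤ (n : ℝ) ^ k := one_le_pow₀ (by linarith)
    linarith
  have hnpow : (1 : ℝ) ≤ (n : ℝ) ^ (3 * k) := one_le_pow₀ (by linarith)
  rcases le_or_gt n₀ n with hlarge | hsmall
  · obtain ⟨m, hm⟩ : ∃ m, TwoModes (isingProp n) (isingRho n M β h) m
        (2 * n * (n + 1) ^ 2 * Real.exp D) (Real.exp (2 * A)) 2 := by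
      rcases le_total 0 h with hh | hh
      · obtain ⟨h1, h2⟩ := hn₀ n hlarge h hh
        exact ⟨_, ising_twoModes n M (by omega) hnM β h hβ hh h1 h2⟩
      · obtain ⟨h1, h2⟩ := hn₀ n hlarge (-h) (by linarith)
        have := twoModes_reverse hM
          (ising_twoModes n M (by omega) hnM β (-h) hβ (by linarith) h1 h2)
        rw [neg_neg, neg_sq, abs_neg] at this
        exact ⟨_, this⟩
    refine (hm.poincare F).trans (mul_le_mul_of_nonneg_right ?_ (add_nonneg hL0 hS0))
    set C := 2 * (n : ℝ) * (n + 1) ^ 2 * Real.exp D with hC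
    set K := Real.exp (2 * A) ^ 4 with hK
    set m1 := (M : ℝ) + 1 with hm1
    have hm1' : 1 ≤ m1 := by simp [hm1]
    have hK1 : 1 ≤ K := one_le_pow₀ (by rw [Real.one_le_exp_iff]; positivity)
    have hC1 : 1 ≤ C := by
      have : 1 ≤ Real.exp D := by rwa [Real.one_le_exp_iff]
      have h2 : (1 : ℝ) ≤ 2 * n * (n + 1) ^ 2 := by
        have : (1 : ℝ) ≤ (n + 1) ^ 2 := one_le_pow₀ (by linarith)
        nlinarith
      exact one_le_mul_of_one_le_of_one_le h2 this
    have hMm : (M : ℝ) = m1 - 1 := by simp [hm1]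
    rw [hMm]
    have hCK : C ≤ C * K := le_mul_of_one_le_right (by linarith) hK1
    have hKC : K ≤ C * K := le_mul_of_one_le_left (by linarith) hC1
    have hm3 : m1 ^ 2 ≤ m1 ^ 3 := pow_le_pow_right₀ hm1' (by norm_num)
    have hm30 : 1 ≤ m1 ^ 3 := one_le_pow₀ hm1'
    have hCK0 : 0 < C * K := by nlinarith
    calc C + m1 ^ 2 * (2 * (1 + 2) * C + 2 * (1 + 2) * (2 * K * ((m1 - 1) * C + 1)))
        ≤ C * K * m1 ^ 3 + (6 * (C * K * m1 ^ 3) + 12 * (C * K * m1 ^ 3) +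
            12 * (C * K * m1 ^ 3)) := by
          have a1 : C ≤ C * K * m1 ^ 3 := hCK.trans (le_mul_of_one_le_right hCK0.le hm30)
          have a2 : m1 ^ 2 * C ≤ C * K * m1 ^ 3 := by
            rw [mul_comm]; exact mul_le_mul hCK hm3 (by positivity) hCK0.le
          have a3 : m1 ^ 2 * K ≤ C * K * m1 ^ 3 := by
            rw [mul_comm]; exact mul_le_mul hKC hm3 (by positivity) hCK0.le
          have a4 : 0 ≤ m1 ^ 2 * (C * K) := by positivity
          nlinarith
      _ = 31 * C * K * m1 ^ 3 := by ring
      _ ≤ 31 * (8 * (n : ℝ) ^ 3 * Real.exp D) * K * (2 * (n : ℝ) ^ k) ^ 3 := by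
          have : C ≤ 8 * (n : ℝ) ^ 3 * Real.exp D :=
            mul_le_mul_of_nonneg_right hC8 (Real.exp_pos _).le
          have hm0 : 0 ≤ m1 := by linarith
          gcongr
      _ = 31 * 64 * (Real.exp D * K) * (n : ℝ) ^ (3 * k + 3) := by ring
      _ ≤ Bc * (n : ℝ) ^ (3 * k + 3) := by
          rw [hBc, hK, ← Real.exp_nat_mul, ← Real.exp_add]
          refine mul_le_mul_of_nonneg_right (mul_le_mul_of_nonneg_left (Real.exp_le_exp.2 ?_)
            (by norm_num)) (by positivity)
          have : 0 ≤ 2 * A * (n₀ : ℝ) ^ 2 := by positivity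
          push_cast
          linarith
  · have hlev := poincare_of_levels hM β h _ (fun i g => ising_level_poincare n M hM β h
      (2 * A * (n₀ : ℝ) ^ 2) i (fun a b hab hb => by
        have hnn : (n : ℝ) ^ 2 ≤ (n₀ : ℝ) ^ 2 := by gcongr
        have h1 := abs_le.1 (logWt_abs n (by omega) β h hβ a (by omega))
        have h2 := abs_le.1 (logWt_abs n (by omega) β h hβ b hb)
        have h3 : A * (n : ℝ) ^ 2 ≤ A * (n₀ : ℝ) ^ 2 := by gcongr
        have h4 : logWt n β h a - logWt n β h b ≤ 2 * A * (n₀ : ℝ) ^ 2 := by linarith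
        have h5 := mul_le_mul_of_nonneg_left h4 (exponent_nonneg i)
        have h6 : ((i : ℕ) : ℝ) / M * (2 * A * (n₀ : ℝ) ^ 2) ≤ 1 * (2 * A * (n₀ : ℝ) ^ 2) :=
          mul_le_mul_of_nonneg_right (exponent_le_one i) (by positivity)
        linarith) g) F
    refine hlev.trans (mul_le_mul ?_ (by linarith) hL0 (by positivity))
    calc 2 * (n : ℝ) * (n + 1) ^ 2 * Real.exp (2 * A * (n₀ : ℝ) ^ 2)
        ≤ 8 * (n : ℝ) ^ 3 * Real.exp (D + 8 * A + 2 * A * (n₀ : ℝ) ^ 2) := by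
          gcongr
          linarith
      _ ≤ 31 * 64 * (n : ℝ) ^ 3 * Real.exp (D + 8 * A + 2 * A * (n₀ : ℝ) ^ 2) := by
          gcongr; norm_num
      _ ≤ (31 * 64 * (n : ℝ) ^ 3 * Real.exp (D + 8 * A + 2 * A * (n₀ : ℝ) ^ 2)) *
          (n : ℝ) ^ (3 * k) := le_mul_of_one_le_right (by positivity) hnpow
      _ = _ := by rw [hBc]; ring

/-! ### From the relaxation time to the mixing time -/

lemma isingRho_lower (n M : ℕ) (hn : 1 ≤ n) (hM : 0 < M) (β h : ℝ) (hβ : 0 < β)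
    (i : Fin (M + 1)) (x : Fin n → Bool) :
    Real.exp (-((2 * (β * (1 + |h|) + 1) + 2) * (n : ℝ) ^ 2)) ≤ isingRho n M β h i x := by
  set A := β * (1 + |h|) + 1
  have hn1 : (1 : ℝ) ≤ n := by exact_mod_cast hn
  have hnn : (n : ℝ) ≤ (n : ℝ) ^ 2 := by nlinarith
  have hθψ : ∀ k, k ≤ n → |((i : ℕ) : ℝ) / M * logWt n β h k| ≤ A * (n : ℝ) ^ 2 := by
    intro k hk
    rw [abs_mul, abs_of_nonneg (exponent_nonneg i)]
    calc _ ≤ 1 * |logWt n β h k| := mul_le_mul_of_nonneg_right (exponent_le_one i) (abs_nonneg _)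
      _ ≤ _ := by rw [one_mul]; exact logWt_abs n hn β h hβ k hk
  have hpow : (2 : ℝ) ^ n ≤ Real.exp n := by
    have : (2 : ℝ) ≤ Real.exp 1 := by linarith [Real.add_one_le_exp (1 : ℝ)]
    calc (2 : ℝ) ^ n ≤ Real.exp 1 ^ n := by gcongr
      _ = _ := by rw [← Real.exp_nat_mul, mul_one]
  have hn2 : (n : ℝ) + 1 ≤ Real.exp n := Real.add_one_le_exp _
  have hZ : partZ n β h (((i : ℕ) : ℝ) / M) ≤ Real.exp n * Real.exp (A * (n : ℝ) ^ 2) := by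
    have h1 : partZ n β h (((i : ℕ) : ℝ) / M) ≤ ((n : ℝ) + 1) * Real.exp (A * (n : ℝ) ^ 2) := by
      unfold partZ
      refine (sum_le_card_nsmul _ _ (Real.exp (A * (n : ℝ) ^ 2)) fun k hk => ?_).trans
        (le_of_eq (by simp))
      refine Real.exp_le_exp.2 ((le_abs_self _).trans (hθψ k ?_))
      have := mem_range.1 hk
      omega
    exact h1.trans (mul_le_mul_of_nonneg_right hn2 (Real.exp_pos _).le)
  have hCh : (n.choose (plusCount n x) : ℝ) ≤ Real.exp n := by
    refine le_trans ?_ hpow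
    exact_mod_cast Nat.choose_le_two_pow _ _
  have hCpos : (0 : ℝ) < n.choose (plusCount n x) := by
    exact_mod_cast Nat.choose_pos (plusCount_le x)
  have hZpos := partZ_pos n β h (((i : ℕ) : ℝ) / M)
  rw [isingRho_eq n M hM, div_div, le_div_iff₀ (by positivity)]
  have hnum : Real.exp (-(A * (n : ℝ) ^ 2)) ≤
      Real.exp (((i : ℕ) : ℝ) / M * logWt n β h (plusCount n x)) :=
    Real.exp_le_exp.2 (abs_le.1 (hθψ _ (plusCount_le x))).1
  refine le_trans ?_ hnum
  calc _ ≤ Real.exp (-((2 * A + 2) * (n : ℝ) ^ 2)) *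
        (Real.exp n * Real.exp (A * (n : ℝ) ^ 2) * Real.exp n) := by
        gcongr
    _ = Real.exp (-((2 * A + 2) * (n : ℝ) ^ 2) + (n + A * (n : ℝ) ^ 2 + n)) := by
        rw [← Real.exp_add, ← Real.exp_add, ← Real.exp_add]
    _ ≤ _ := Real.exp_le_exp.2 (by linarith)

/-- A Poincaré constant `C ≥ 1` and a pointwise lower bound `e^(-L)` on the level distributions
bound the mixing time. -/
lemma mixingTime_le {n M : ℕ} (hM : 0 < M) (β h C L : ℝ) (hC : 1 ≤ C) (hL : 0 ≤ L)
    (hgap : ∀ F : (Fin (M + 1) → (Fin n → Bool)) → ℝ,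
      ∑ x, prodWt (isingRho n M β h) x * F x ^ 2 -
        (∑ x, prodWt (isingRho n M β h) x * F x) ^ 2 ≤
      C * (levelEnergy (isingProp n) (isingRho n M β h) F +
        ∑ j, swapEnergyAt (isingRho n M β h) F j))
    (hlow : ∀ i x, Real.exp (-L) ≤ isingRho n M β h i x) (ε : ℝ) (hε0 : 0 < ε) (hε1 : ε < 1) :
    (mixingTime (swapChain (isingProp n) (isingRho n M β h))
      (fun x : Fin (M + 1) → (Fin n → Bool) => ∏ i, isingRho n M β h i (x i)) ε : ℝ) ≤
      9 * C * ((M : ℝ) + 1) ^ 2 * (L + 2) * (1 + Real.log (1 / ε)) := by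
  set p := isingRho n M β h with hp
  have hpos : ∀ i a, 0 < p i a := isingRho_pos n M hM β h
  set ℓ := Real.log (1 / ε) with hℓ
  have hℓ0 : 0 ≤ ℓ := Real.log_nonneg (by rw [le_div_iff₀ hε0]; linarith)
  have hεℓ : Real.exp (-(2 * ℓ)) = ε ^ 2 := by
    have : Real.exp (-ℓ) = ε := by
      rw [hℓ, one_div, Real.log_inv, neg_neg, Real.exp_log hε0]
    rw [← this, ← Real.exp_nat_mul]
    congr 1
    push_cast
    ring
  set m1 := (M : ℝ) + 1 with hm1
  have hm1' : 1 ≤ m1 := by simp [hm1]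
  have hprod : ∀ x, Real.exp (-(m1 * L)) ≤ prodWt p x := by
    intro x
    unfold prodWt
    calc Real.exp (-(m1 * L)) = ∏ _i : Fin (M + 1), Real.exp (-L) := by
          rw [prod_const, card_univ, Fintype.card_fin, ← Real.exp_nat_mul]
          congr 1
          push_cast
          ring
      _ ≤ _ := prod_le_prod (fun _ _ => (Real.exp_pos _).le) fun i _ => hlow i (x i)
  set T := 8 * C * m1 * (m1 * L + 2 * ℓ) with hT
  have hT0 : 0 ≤ T := by positivity
  have hmix : mixingTime (swapChain (isingProp n) p)
      (fun x : Fin (M + 1) → (Fin n → Bool) => ∏ i, p i (x i)) ε ≤ ⌈T⌉₊ := by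
    refine Nat.sInf_le ?_
    intro t ht x
    have htT : T ≤ t := Nat.ceil_le.1 ht
    have hdec := swapChain_tv_decay (isingProp n) p isingProp_nonneg isingProp_symm
      isingProp_offdiag hpos (isingRho_sum n M hM β h) hM C (by linarith) hgap t x
    have hsq : (∑ y, |(swapChain (isingProp n) p ^ t) x y - prodWt p y|) ^ 2 ≤ ε ^ 2 := by
      refine hdec.trans ?_
      rw [div_le_iff₀ (prodWt_pos hpos x)]
      calc Real.exp (-((t : ℝ) / (4 * (C * (2 * m1))))) ≤ Real.exp (-(2 * ℓ) + -(m1 * L)) := by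
            refine Real.exp_le_exp.2 ?_
            have : m1 * L + 2 * ℓ ≤ (t : ℝ) / (4 * (C * (2 * m1))) := by
              rw [le_div_iff₀ (by positivity)]
              refine le_trans (le_of_eq ?_) htT
              rw [hT]; ring
            linarith
        _ = ε ^ 2 * Real.exp (-(m1 * L)) := by rw [Real.exp_add, hεℓ]
        _ ≤ _ := mul_le_mul_of_nonneg_left (hprod x) (by positivity)
    have habs := abs_le_of_sq_le_sq hsq hε0.le
    have h1 : ∑ y, |(swapChain (isingProp n) p ^ t) x y - prodWt p y| ≤ ε :=
      (le_abs_self _).trans habs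
    have h2 : 0 ≤ ∑ y, |(swapChain (isingProp n) p ^ t) x y - prodWt p y| :=
      sum_nonneg fun _ _ => abs_nonneg _
    change (1 / 2) * ∑ y, |(swapChain (isingProp n) p ^ t) x y - prodWt p y| ≤ ε
    linarith
  calc ((mixingTime (swapChain (isingProp n) p)
      (fun x : Fin (M + 1) → (Fin n → Bool) => ∏ i, p i (x i)) ε : ℕ) : ℝ) ≤ (⌈T⌉₊ : ℝ) := by
        exact_mod_cast hmix
    _ ≤ T + 1 := (Nat.ceil_lt_add_one hT0).le
    _ ≤ 8 * C * m1 ^ 2 * (L + 2) * (1 + ℓ) + C * m1 ^ 2 * (L + 2) * (1 + ℓ) := by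
        have hCm : 1 ≤ C * m1 ^ 2 := one_le_mul_of_one_le_of_one_le hC (one_le_pow₀ hm1')
        have hX : 1 ≤ (L + 2) * (1 + ℓ) := by nlinarith
        refine add_le_add ?_ ?_
        · have h1 : m1 * L + 2 * ℓ ≤ m1 * ((L + 2) * (1 + ℓ)) := by
            have : 2 * ℓ ≤ m1 * (2 * ℓ) := le_mul_of_one_le_left (by positivity) hm1'
            have h3 : 0 ≤ m1 * (L * ℓ) := by positivity
            nlinarith
          calc T ≤ 8 * C * m1 * (m1 * ((L + 2) * (1 + ℓ))) := by
                rw [hT]; gcongr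
            _ = _ := by ring
        · rw [mul_assoc]
          exact one_le_mul_of_one_le_of_one_le hCm hX
    _ = _ := by ring

/-- for every `β > 0`, every external field `h` and every `k ≥ 2` there is
`c > 0` such that for all `n ≥ 2` and every `M` with `n² ≤ M ≤ n^k`, the Flat-swap chain
for the mean-field Ising model on `n` vertices with the entropy-dampening distributions
`ρ₀,…,ρ_M` has mixing time `τ(ε) ≤ n^c·(1 + ln(1/ε))` for every `ε ∈ (0,1)`. -/
theorem flat_swap_ising_polynomial_mixing :
    ∀ β : ℝ, 0 < β → ∀ h : ℝ, ∀ k : ℕ, 2 ≤ k → ∃ c : ℝ, 0 < c ∧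
      ∀ n : ℕ, 2 ≤ n → ∀ M : ℕ, n ^ 2 ≤ M → M ≤ n ^ k →
        ∀ ε : ℝ, 0 < ε → ε < 1 →
          (mixingTime (swapChain (isingProp n) (isingRho n M β h))
              (fun x : Fin (M+1) → (Fin n → Bool) => ∏ i, isingRho n M β h i (x i))
              ε : ℝ) ≤
            (n : ℝ) ^ c * (1 + Real.log (1 / ε)) := by
  intro β hβ h k _
  obtain ⟨Bc, hBc1, hgap⟩ := ising_gap β hβ h k
  set A := β * (1 + |h|) + 1 with hA
  have hA0 : 0 ≤ A := by positivity
  -- the mixing time is at most `B * n ^ N * (1 + log (1 / ε))`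
  set B := 36 * Bc * (2 * A + 4) with hB
  set N := 5 * k + 5 with hN
  have hB1 : 1 ≤ B := by rw [hB]; nlinarith
  have hlogb : 0 ≤ Real.logb 2 B := Real.logb_nonneg (by norm_num) hB1
  -- `n ≥ 2` lets the exponent absorb the constant: `B = 2 ^ logb 2 B ≤ n ^ logb 2 B`
  refine ⟨(N : ℝ) + Real.logb 2 B, ?_, fun n hn M hnM hMk ε hε0 hε1 => ?_⟩
  · have : (0 : ℝ) < N := by rw [hN]; positivity
    linarith
  have hM : 0 < M := lt_of_lt_of_le (by positivity) hnM
  have hnR : (2 : ℝ) ≤ n := by exact_mod_cast hn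
  have hn1 : (1 : ℝ) ≤ n := by linarith
  have hmix := mixingTime_le hM β h (Bc * (n : ℝ) ^ (3 * k + 3)) ((2 * A + 2) * (n : ℝ) ^ 2)
    (one_le_mul_of_one_le_of_one_le hBc1 (one_le_pow₀ hn1)) (by positivity)
    (hgap n hn M hnM hMk) (isingRho_lower n M (by omega) hM β h hβ) ε hε0 hε1
  have hlog : 0 ≤ Real.log (1 / ε) := Real.log_nonneg (by rw [le_div_iff₀ hε0]; linarith)
  refine hmix.trans (mul_le_mul_of_nonneg_right ?_ (by linarith))
  have hMR : (M : ℝ) + 1 ≤ 2 * (n : ℝ) ^ k := by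
    have h1 : (M : ℝ) ≤ (n : ℝ) ^ k := by exact_mod_cast hMk
    have h2 : (1 : ℝ) ≤ (n : ℝ) ^ k := one_le_pow₀ hn1
    linarith
  have hL : (2 * A + 2) * (n : ℝ) ^ 2 + 2 ≤ (2 * A + 4) * (n : ℝ) ^ 2 := by
    have : (1 : ℝ) ≤ (n : ℝ) ^ 2 := one_le_pow₀ hn1
    linarith
  calc 9 * (Bc * (n : ℝ) ^ (3 * k + 3)) * ((M : ℝ) + 1) ^ 2 * ((2 * A + 2) * (n : ℝ) ^ 2 + 2)
      ≤ 9 * (Bc * (n : ℝ) ^ (3 * k + 3)) * (2 * (n : ℝ) ^ k) ^ 2 *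
          ((2 * A + 4) * (n : ℝ) ^ 2) := by
        gcongr
    _ = (n : ℝ) ^ N * B := by rw [hB, hN]; ring
    _ ≤ (n : ℝ) ^ N * (n : ℝ) ^ Real.logb 2 B := by
        gcongr
        calc B = (2 : ℝ) ^ Real.logb 2 B :=
              (Real.rpow_logb (by norm_num) (by norm_num) (by linarith)).symm
          _ ≤ _ := Real.rpow_le_rpow (by norm_num) hnR hlogb
    _ = _ := by rw [Real.rpow_add (by linarith), Real.rpow_natCast]
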